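/- arXiv:math/0303318 — 7 statements merged into one kernel-verified Lean document; each statement's English description precedes it below -/
import Mathlib

section
/- Let A be a unital C*-algebra carrying a faithful tracial state τ, and let p, q be positive real numbers with 1/p + 1/q = 1. Then for all positive elements a, b ∈ A, τ(|ab|) ≤ p⁻¹ τ(aᵖ) + q⁻¹ τ(b^q). -/
open scoped ComplexOrder

/-- The absolute value `|z| = (z*z)^(1/2)` of an element of a C*-algebra. -/
noncomputable def CStarAbs {A : Type*} [CStarAlgebra A] [PartialOrder A] [StarOrderedRing A]
    (z : A) : A := CFC.sqrt (star z * z)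

section helpers

variable {A : Type*} [CStarAlgebra A] [PartialOrder A] [StarOrderedRing A]

lemma ty_star (τ : A →ₗ[ℂ] ℂ) (hτpos : ∀ a : A, 0 ≤ a → 0 ≤ τ a) (x : A) :
    τ (star x) = star (τ x) := by
  have := map_star (PositiveLinearMap.mk₀ τ hτpos) x
  exact this

lemma ty_cont (τ : A →ₗ[ℂ] ℂ) (hτpos : ∀ a : A, 0 ≤ a → 0 ≤ τ a) : Continuous τ := by
  have := map_continuous (PositiveLinearMap.mk₀ τ hτpos)
  exact this

lemma ty_bound (τ : A →ₗ[ℂ] ℂ) (hτpos : ∀ a : A, 0 ≤ a → 0 ≤ τ a)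
    (hτtr : ∀ x y : A, τ (x * y) = τ (y * x)) (x c : A) (hx : x ∈ unitary A) (hc : 0 ≤ c) :
    ‖τ (x * c)‖ ≤ (τ c).re := by
  obtain ⟨ζ, hζ, hζ2⟩ : ∃ ζ : ℂ, ‖ζ‖ = 1 ∧ ζ * τ (x * c) = ‖τ (x * c)‖ := by
    by_cases h : τ (x * c) = 0
    · exact ⟨1, by simp, by simp [h]⟩
    · have h' : (‖τ (x * c)‖ : ℂ) ≠ 0 := by simpa using h
      refine ⟨star (τ (x * c)) / ‖τ (x * c)‖, by simp [h], ?_⟩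
      field_simp
      have := RCLike.conj_mul (τ (x * c))
      simpa using this
  have h1 : star x * x = 1 := Unitary.star_mul_self_of_mem hx
  have h2 : x * star x = 1 := Unitary.mul_star_self_of_mem hx
  have hsc : star c = c := (IsSelfAdjoint.of_nonneg hc).star_eq
  have hpos : 0 ≤ (fun y => τ (star y * c * y)) (star x - ζ • 1 : A) := by
    apply hτpos
    exact star_left_conjugate_nonneg hc _
  have e : (fun y => τ (star y * c * y)) (star x - ζ • 1 : A)
      = τ c + τ c - ζ * τ (x * c) - star (ζ * τ (x * c)) := by
    have e1 : star (star x - ζ • 1 : A) * c * (star x - ζ • 1 : A)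
      = x * c * star x - ζ • (x * c) - star ζ • star (x * c) + (star ζ * ζ) • c := by
      simp [sub_mul, mul_sub, hsc]
      module
    have e2 : star ζ * ζ = 1 := by
      have := RCLike.conj_mul ζ
      simpa [hζ] using this
    simp only [e1, map_add, map_sub, map_smul, ty_star τ hτpos, e2, one_smul, smul_eq_mul]
    rw [hτtr (x * c) (star x), ← mul_assoc, h1, one_mul, star_mul']
    ring
  rw [e, hζ2] at hpos
  have := (Complex.le_def.1 hpos).1
  simp at this
  linarith

lemma ty_exp_add (X : A) (s t : ℂ) :
    NormedSpace.exp ((s + t) • X) = NormedSpace.exp (s • X) * NormedSpace.exp (t • X) := by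
  let +nondep : NormedAlgebra ℚ A := .restrictScalars ℚ ℂ A
  rw [add_smul]
  exact NormedSpace.exp_add_of_commute (((Commute.refl X).smul_left s).smul_right t)

lemma ty_exp_unitary (X : A) (hX : IsSelfAdjoint X) (t : ℝ) :
    NormedSpace.exp ((t * Complex.I) • X) ∈ unitary A := by
  have h : IsSelfAdjoint (t • X) := (IsSelfAdjoint.all t).smul hX
  have := (selfAdjoint.expUnitary ⟨t • X, h⟩).2
  simpa [mul_comm (t : ℂ), mul_smul] using this

lemma ty_exp_diff (X : A) : Differentiable ℂ (fun z : ℂ => NormedSpace.exp (z • X)) :=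
  fun z => (hasDerivAt_exp_smul_const X z).differentiableAt

lemma ty_exp_bdd (X : A) (hX : IsSelfAdjoint X) :
    ∃ C : ℝ, ∀ z : ℂ, z.re ∈ Set.Icc (0:ℝ) 1 → ‖NormedSpace.exp (z • X)‖ ≤ C := by
  have hc : ContinuousOn (fun s : ℝ => NormedSpace.exp ((s : ℂ) • X)) (Set.Icc 0 1) :=
    ((ty_exp_diff X).continuous.comp Complex.continuous_ofReal).continuousOn
  obtain ⟨C, hC⟩ := isCompact_Icc.exists_bound_of_continuousOn hc
  refine ⟨C, fun z hz => ?_⟩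
  have : z = (z.im * Complex.I) + z.re := by rw [add_comm, Complex.re_add_im]
  rw [this, ty_exp_add, CStarRing.norm_mem_unitary_mul _ (ty_exp_unitary X hX z.im)]
  exact hC _ hz

open Complex.HadamardThreeLines in
lemma ty_core (τ : A →ₗ[ℂ] ℂ) (hτpos : ∀ a : A, 0 ≤ a → 0 ≤ τ a)
    (hτtr : ∀ x y : A, τ (x * y) = τ (y * x)) (w X Y : A) (hw : w ∈ unitary A)
    (hX : IsSelfAdjoint X) (hY : IsSelfAdjoint Y) (θ : ℝ) (h0 : 0 ≤ θ) (h1 : θ ≤ 1) :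
    ‖τ (w * (NormedSpace.exp ((θ : ℂ) • X) * NormedSpace.exp (((1 - θ : ℝ) : ℂ) • Y)))‖
      ≤ (τ (NormedSpace.exp Y)).re ^ (1 - θ) * (τ (NormedSpace.exp X)).re ^ θ := by
  set F : ℂ → ℂ := fun z =>
    τ (w * (NormedSpace.exp (z • X) * NormedSpace.exp ((1 - z) • Y))) with hF
  have hdA : Differentiable ℂ (fun z : ℂ =>
      w * (NormedSpace.exp (z • X) * NormedSpace.exp ((1 - z) • Y))) := by
    have := (ty_exp_diff Y).comp (differentiable_const (1:ℂ) |>.sub differentiable_id)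
    exact ((ty_exp_diff X).mul this).const_mul w
  have hd : Differentiable ℂ F :=
    (ContinuousLinearMap.differentiable (⟨τ, ty_cont τ hτpos⟩ : A →L[ℂ] ℂ)).comp hdA
  have key := norm_le_interp_of_mem_verticalClosedStrip₀₁' F (z := (θ : ℂ))
    (a := (τ (NormedSpace.exp Y)).re) (b := (τ (NormedSpace.exp X)).re)
    (by simp [verticalClosedStrip, h0, h1]) hd.diffContOnCl ?_ ?_ ?_
  · simpa [hF] using key
  · obtain ⟨C, hC⟩ := ty_exp_bdd X hX
    obtain ⟨D, hD⟩ := ty_exp_bdd Y hY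
    set T : A →L[ℂ] ℂ := ⟨τ, ty_cont τ hτpos⟩
    refine ⟨‖T‖ * (C * D), ?_⟩
    rintro _ ⟨z, hz, rfl⟩
    have hz : z.re ∈ Set.Icc (0:ℝ) 1 := hz
    have a1 := hC z hz
    have a2 := hD (1 - z) (by simp at hz ⊢; constructor <;> linarith)
    change ‖T _‖ ≤ _
    refine (T.le_opNorm _).trans ?_
    rw [CStarRing.norm_mem_unitary_mul _ hw]
    gcongr
    refine (norm_mul_le _ _).trans ?_
    have := (norm_nonneg _).trans a1
    gcongr
  · intro z hz
    have hz : z.re = 0 := hz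
    have e1 : z = z.im * Complex.I := by
      conv_lhs => rw [← Complex.re_add_im z, hz]
      simp
    have e2 : 1 - z = 1 + ((-z.im : ℝ) : ℂ) * Complex.I := by
      conv_lhs => rw [e1]
      push_cast; ring
    have : F z = τ ((NormedSpace.exp ((((-z.im : ℝ) : ℂ) * Complex.I) • Y) *
        (w * NormedSpace.exp (((z.im : ℂ) * Complex.I) • X))) * NormedSpace.exp Y) := by
      simp only [hF]
      rw [e2, ty_exp_add, one_smul, mul_assoc (NormedSpace.exp _), hτtr (NormedSpace.exp _), ← e1]
      simp only [mul_assoc]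
    rw [this]
    exact ty_bound τ hτpos hτtr _ _
      (mul_mem (ty_exp_unitary Y hY _) (mul_mem hw (ty_exp_unitary X hX _))) hY.exp_nonneg
  · intro z hz
    have hz : z.re = 1 := hz
    have e1 : z = 1 + z.im * Complex.I := by
      conv_lhs => rw [← Complex.re_add_im z, hz]
      simp
    have e2 : 1 - z = ((-z.im : ℝ) : ℂ) * Complex.I := by
      conv_lhs => rw [e1]
      push_cast; ring
    have : F z = τ ((NormedSpace.exp ((((-z.im : ℝ) : ℂ) * Complex.I) • Y) *
        (w * NormedSpace.exp (((z.im : ℂ) * Complex.I) • X))) * NormedSpace.exp X) := by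
      have e3 : NormedSpace.exp (z • X) =
          NormedSpace.exp (((z.im : ℂ) * Complex.I) • X) * NormedSpace.exp X := by
        conv_lhs => rw [e1, add_comm, ty_exp_add, one_smul]
      simp only [hF]
      rw [e2, e3, ← mul_assoc, hτtr (w * _)]
      simp only [mul_assoc]
    rw [this]
    exact ty_bound τ hτpos hτtr _ _
      (mul_mem (ty_exp_unitary Y hY _) (mul_mem hw (ty_exp_unitary X hX _))) hX.exp_nonneg

lemma ty_rpow (a : A) (ha : IsStrictlyPositive a) (p : ℝ) :
    a ^ p = NormedSpace.exp (p • CFC.log a) := by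
  have ha₂ : ∀ x ∈ spectrum ℝ a, x ≠ 0 := by grind
  have hc : ContinuousOn Real.log (spectrum ℝ a) := by fun_prop (disch := assumption)
  rw [← CFC.real_exp_eq_normedSpace_exp ((IsSelfAdjoint.all p).smul IsSelfAdjoint.log), CFC.log,
    ← cfc_smul p Real.log a hc, ← cfc_comp' Real.exp _ a (by fun_prop) (by fun_prop),
    CFC.rpow_eq_cfc_real ha.nonneg]
  refine cfc_congr fun x hx => ?_
  have hx0 : 0 < x := ha.spectrum_pos hx
  simp [Real.rpow_def_of_pos hx0, mul_comm]

lemma ty_inv (τ : A →ₗ[ℂ] ℂ) (hτpos : ∀ a : A, 0 ≤ a → 0 ≤ τ a)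
    (hτtr : ∀ x y : A, τ (x * y) = τ (y * x))
    (p q : ℝ) (hp : 0 < p) (hq : 0 < q) (hpq : 1 / p + 1 / q = 1)
    (a b : A) (ha : IsStrictlyPositive a) (hb : IsStrictlyPositive b) :
    τ (CStarAbs (a * b)) ≤ (p⁻¹ : ℂ) * τ (a ^ p) + (q⁻¹ : ℂ) * τ (b ^ q) := by
  have hz : IsUnit (a * b) := ha.isUnit.mul hb.isUnit
  have hpos : 0 ≤ star (a * b) * (a * b) := star_mul_self_nonneg _
  have hm0 : 0 ≤ CStarAbs (a * b) := CFC.sqrt_nonneg _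
  have hmsa : star (CStarAbs (a * b)) = CStarAbs (a * b) := (IsSelfAdjoint.of_nonneg hm0).star_eq
  have hmm : CStarAbs (a * b) * CStarAbs (a * b) = star (a * b) * (a * b) :=
    CFC.sqrt_mul_sqrt_self _ hpos
  obtain ⟨m, hm⟩ : IsUnit (CStarAbs (a * b)) := by
    have h : IsUnit (CStarAbs (a * b) * CStarAbs (a * b)) := by
      rw [hmm]; exact hz.star.mul hz
    exact (Commute.isUnit_mul_iff (Commute.refl _)).1 h |>.1
  obtain ⟨z, hz⟩ := hz
  rw [← hm, ← hz] at hmm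
  have hms : star m = m := Units.ext (by simp [hm, hmsa])
  have hmmu : m * m = star z * z := Units.ext (by simpa using hmm)
  have hw : (((m⁻¹ * star z : Aˣ)) : A) ∈ unitary A := by
    have e : star (m⁻¹ * star z) = z * m⁻¹ := by simp [hms]
    rw [Unitary.mem_iff]
    constructor
    · rw [← Units.coe_star, ← Units.val_mul, e]
      have : z * m⁻¹ * (m⁻¹ * star z) = z * (m * m)⁻¹ * star z := by group
      rw [this, hmmu]; simp
    · rw [← Units.coe_star, ← Units.val_mul, e]
      have : m⁻¹ * star z * (z * m⁻¹) = m⁻¹ * (star z * z) * m⁻¹ := by group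
      rw [this, ← hmmu]; simp
  have hmz : CStarAbs (a * b) = ((m⁻¹ * star z : Aˣ) : A) * (a * b) := by
    rw [← hm, ← hz, ← Units.val_mul, mul_assoc, ← hmmu]; simp
  have hθ : 1 - p⁻¹ = q⁻¹ := by simp at hpq; linarith
  have hsa := (IsSelfAdjoint.all p).smul (IsSelfAdjoint.log (a := a))
  have hsb := (IsSelfAdjoint.all q).smul (IsSelfAdjoint.log (a := b))
  have key := ty_core τ hτpos hτtr _ _ _ hw hsa hsb p⁻¹ (by positivity)
    (by have : 0 < q⁻¹ := by positivity
        linarith)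
  rw [hθ] at key
  have ea : NormedSpace.exp (((p⁻¹ : ℝ) : ℂ) • p • CFC.log a) = a := by
    rw [Complex.coe_smul, smul_smul, inv_mul_cancel₀ hp.ne', one_smul, CFC.exp_log a ha]
  have eb : NormedSpace.exp (((q⁻¹ : ℝ) : ℂ) • q • CFC.log b) = b := by
    rw [Complex.coe_smul, smul_smul, inv_mul_cancel₀ hq.ne', one_smul, CFC.exp_log b hb]
  rw [ea, eb, ← hmz, ← ty_rpow a ha, ← ty_rpow b hb] at key
  have p1 := Complex.le_def.1 (hτpos _ (CFC.rpow_nonneg (a := a) (y := p)))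
  have p2 := Complex.le_def.1 (hτpos _ (CFC.rpow_nonneg (a := b) (y := q)))
  have p3 := Complex.le_def.1 (hτpos _ hm0)
  simp only [Complex.zero_re, Complex.zero_im] at p1 p2 p3
  have am := Real.geom_mean_le_arith_mean2_weighted (w₁ := q⁻¹) (w₂ := p⁻¹) (by positivity)
    (by positivity) p2.1 p1.1 (by linarith)
  have := Complex.re_le_norm (τ (CStarAbs (a * b)))
  rw [← Complex.ofReal_inv, ← Complex.ofReal_inv, Complex.le_def]
  simp [← p1.2, ← p2.2, ← p3.2]
  linarith

lemma ty_tendsto (a : A) (ha : 0 ≤ a) (p : ℝ) (hp : 0 < p) :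
    Filter.Tendsto (fun ε : ℝ => (a + algebraMap ℝ A ε) ^ p) (nhdsWithin 0 (Set.Ioi 0))
      (nhds (a ^ p)) := by
  lift p to NNReal using hp.le
  have hp' : 0 < p := by exact_mod_cast hp
  simp only [← CFC.nnrpow_eq_rpow hp']
  have hc := CFC.continuousOn_nnrpow (A := A) p a ha
  refine hc.tendsto.comp (tendsto_nhdsWithin_iff.2 ⟨?_, ?_⟩)
  · have : Continuous (fun ε : ℝ => a + algebraMap ℝ A ε) := by fun_prop
    have := this.tendsto 0
    simp only [map_zero, add_zero] at this
    exact this.mono_left nhdsWithin_le_nhds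
  · filter_upwards [self_mem_nhdsWithin] with ε hε
    exact add_nonneg ha (algebraMap_nonneg A (le_of_lt hε))

lemma ty_sp (a : A) (ha : 0 ≤ a) (ε : ℝ) (hε : 0 < ε) :
    IsStrictlyPositive (a + algebraMap ℝ A ε) := by
  have : IsStrictlyPositive (algebraMap ℝ A ε) := isStrictlyPositive_algebraMap hε
  exact this.of_le (le_add_of_nonneg_left ha)

end helpers

/-- **Tracial Young inequality in a C*-algebra.** -/
theorem tracial_young_inequality {A : Type*} [CStarAlgebra A] [PartialOrder A] [StarOrderedRing A]
    (τ : A →ₗ[ℂ] ℂ) (hτ1 : τ 1 = 1)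
    (hτpos : ∀ a : A, 0 ≤ a → 0 ≤ τ a)
    (hτtr : ∀ x y : A, τ (x * y) = τ (y * x))
    (hτfaithful : ∀ a : A, 0 ≤ a → τ a = 0 → a = 0)
    (p q : ℝ) (hp : 0 < p) (hq : 0 < q) (hpq : 1 / p + 1 / q = 1)
    (a b : A) (ha : 0 ≤ a) (hb : 0 ≤ b) :
    τ (CStarAbs (a * b)) ≤ (p⁻¹ : ℂ) * τ (a ^ p) + (q⁻¹ : ℂ) * τ (b ^ q) := by
  have hτc := ty_cont τ hτpos
  have h1 := (hτc.tendsto _).comp (ty_tendsto a ha p hp)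
  have h2 := (hτc.tendsto _).comp (ty_tendsto b hb q hq)
  have hR := (h1.const_mul (p⁻¹ : ℂ)).add (h2.const_mul (q⁻¹ : ℂ))
  have hL : Filter.Tendsto (fun ε : ℝ => τ (CStarAbs ((a + algebraMap ℝ A ε) *
      (b + algebraMap ℝ A ε)))) (nhdsWithin 0 (Set.Ioi 0)) (nhds (τ (CStarAbs (a * b)))) := by
    refine (hτc.tendsto _).comp ?_
    have hc := CFC.continuousOn_sqrt (A := A) (star (a * b) * (a * b)) (star_mul_self_nonneg _)
    refine hc.tendsto.comp (tendsto_nhdsWithin_iff.2 ⟨?_, ?_⟩)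
    · have : Continuous (fun ε : ℝ => star ((a + algebraMap ℝ A ε) * (b + algebraMap ℝ A ε)) *
        ((a + algebraMap ℝ A ε) * (b + algebraMap ℝ A ε))) := by fun_prop
      have := this.tendsto 0
      simp only [map_zero, add_zero] at this
      exact this.mono_left nhdsWithin_le_nhds
    · exact Filter.Eventually.of_forall fun ε => star_mul_self_nonneg _
  refine le_of_tendsto_of_tendsto hL hR ?_
  filter_upwards [self_mem_nhdsWithin] with ε hε
  exact ty_inv τ hτpos hτtr p q hp hq hpq _ _ (ty_sp a ha ε hε) (ty_sp b hb ε hε)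
end

section
/- Let A be a unital C*-algebra carrying a faithful tracial state τ, and let p, q be positive real numbers with 1/p + 1/q = 1. For positive elements a, b ∈ A, equality τ(|ab|) = p⁻¹ τ(aᵖ) + q⁻¹ τ(b^q) holds if and only if b^q = aᵖ. -/
open scoped ComplexOrder

theorem tye_star {A : Type*} [CStarAlgebra A] [PartialOrder A] [StarOrderedRing A]
    (τ : A →ₗ[ℂ] ℂ) (hpos : ∀ a : A, 0 ≤ a → 0 ≤ τ a) (x : A) :
    τ (star x) = star (τ x) := by
  exact map_star (PositiveLinearMap.mk₀ τ hpos) x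

theorem tye_star_re {A : Type*} [CStarAlgebra A] [PartialOrder A] [StarOrderedRing A]
    (τ : A →ₗ[ℂ] ℂ) (hpos : ∀ a : A, 0 ≤ a → 0 ≤ τ a) (x : A) :
    (τ (star x)).re = (τ x).re := by
  rw [tye_star τ hpos]; simp

theorem tye_re_nonneg {A : Type*} [CStarAlgebra A] [PartialOrder A] [StarOrderedRing A]
    (τ : A →ₗ[ℂ] ℂ) (hpos : ∀ a : A, 0 ≤ a → 0 ≤ τ a) (x : A) (hx : 0 ≤ x) :
    0 ≤ (τ x).re := (Complex.le_def.1 (hpos x hx)).1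

theorem tye_re_mono {A : Type*} [CStarAlgebra A] [PartialOrder A] [StarOrderedRing A]
    (τ : A →ₗ[ℂ] ℂ) (hpos : ∀ a : A, 0 ≤ a → 0 ≤ τ a) (x y : A) (hx : x ≤ y) :
    (τ x).re ≤ (τ y).re := by
  have := tye_re_nonneg τ hpos (y - x) (sub_nonneg.2 hx)
  simp at this; linarith

theorem tye_star_mul_le_one {A : Type*} [CStarAlgebra A] [PartialOrder A] [StarOrderedRing A]
    (w : A) (hw : ‖w‖ ≤ 1) : star w * w ≤ 1 := by
  have h := CStarAlgebra.star_mul_le_algebraMap_norm_sq (a := w)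
  refine h.trans ?_
  rw [← map_one (algebraMap ℝ A)]
  exact algebraMap_mono _ (by nlinarith [norm_nonneg w])

/-- `2 Re τ(s* t) ≤ τ(s* s) + τ(t* t)`. -/
theorem tye_amgm {A : Type*} [CStarAlgebra A] [PartialOrder A] [StarOrderedRing A]
    (τ : A →ₗ[ℂ] ℂ) (hpos : ∀ a : A, 0 ≤ a → 0 ≤ τ a) (s t : A) :
    2 * (τ (star s * t)).re ≤ (τ (star s * s)).re + (τ (star t * t)).re := by
  have h := tye_re_nonneg τ hpos (star (s - t) * (s - t)) (star_mul_self_nonneg _)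
  have h2 := tye_star_re τ hpos (star s * t)
  simp only [star_mul, star_star] at h2
  simp only [star_sub, sub_mul, mul_sub, map_sub, Complex.sub_re] at h
  linarith

theorem tye_norm_le {A : Type*} [CStarAlgebra A] [PartialOrder A] [StarOrderedRing A]
    (τ : A →ₗ[ℂ] ℂ) (hpos : ∀ a : A, 0 ≤ a → 0 ≤ τ a)
    (htr : ∀ x y : A, τ (x * y) = τ (y * x))
    (w h : A) (hw : ‖w‖ ≤ 1) (hh : 0 ≤ h) : ‖τ (w * h)‖ ≤ (τ h).re := by
  obtain ⟨l, hl, hl2⟩ : ∃ l : ℂ, ‖l‖ ≤ 1 ∧ ((l * τ (w * h)).re = ‖τ (w * h)‖) := by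
    by_cases h0 : τ (w * h) = 0
    · exact ⟨0, by simp, by simp [h0]⟩
    · refine ⟨star (τ (w * h)) / ‖τ (w * h)‖, ?_, ?_⟩
      · simp [h0]
      · rw [div_mul_eq_mul_div, mul_comm]
        have : τ (w * h) * star (τ (w * h)) = ((‖τ (w * h)‖ ^ 2 : ℝ) : ℂ) := by
          push_cast
          exact Complex.mul_conj' _
        rw [this, ← Complex.ofReal_div, Complex.ofReal_re]
        field_simp
  have hlw : ‖l • w‖ ≤ 1 := by
    rw [norm_smul]
    nlinarith [norm_nonneg l, norm_nonneg w]
  rw [← hl2, ← smul_eq_mul, ← map_smul, ← smul_mul_assoc]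
  generalize l • w = w' at hlw
  set k := CFC.sqrt h with hk
  have hkk : k * k = h := CFC.sqrt_mul_sqrt_self h
  have hks : star k = k := (CFC.sqrt_nonneg h).isSelfAdjoint
  have h1 := tye_amgm τ hpos k (w' * k)
  have h2 : τ (star k * (w' * k)) = τ (w' * h) := by
    rw [hks, htr, mul_assoc, hkk]
  have h3 : (τ (star (w' * k) * (w' * k))).re ≤ (τ h).re := by
    apply tye_re_mono τ hpos
    have := star_left_conjugate_le_conjugate (tye_star_mul_le_one w' hlw) k
    simpa [mul_assoc, hks, hkk] using this
  rw [h2, hks, hkk] at h1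
  linarith

/-- approximate polar decomposition -/
theorem tye_polar {A : Type*} [CStarAlgebra A] [PartialOrder A] [StarOrderedRing A]
    (c : A) (ε : ℝ) (hε : 0 < ε) :
    ∃ v : A, ‖v‖ ≤ 1 ∧ c = v * (CStarAbs c + algebraMap ℝ A ε) ∧
      CStarAbs c - algebraMap ℝ A ε ≤ star v * c := by
  set h := CStarAbs c with hh
  have hh0 : 0 ≤ h := CFC.sqrt_nonneg _
  have hh2 : h * h = star c * c := CFC.sqrt_mul_sqrt_self _ (star_mul_self_nonneg c)
  set e := algebraMap ℝ A ε with he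
  have he0 : 0 ≤ e := algebraMap_nonneg _ hε.le
  have heP : IsStrictlyPositive e := by
    rw [he]; cfc_tac
  have hP : IsStrictlyPositive (h + e) := heP.nonneg_add hh0
  have hce : Commute e h := Algebra.commutes ε h
  obtain ⟨g, hg⟩ := hP.isUnit
  set k : A := (↑g⁻¹ : A) with hk
  have hk1 : k * (h + e) = 1 := by rw [← hg]; simp [hk]
  have hk2 : (h + e) * k = 1 := by rw [← hg]; simp [hk]
  have hk0 : 0 ≤ k := by
    have : (0 : A) ≤ g := by rw [hg]; exact hP.nonneg
    exact CFC.inv_nonneg_of_nonneg g this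
  have hks : star k = k := hk0.isSelfAdjoint
  have hss : star (h + e) = h + e := hP.nonneg.isSelfAdjoint
  refine ⟨c * k, ?_, ?_, ?_⟩
  · have h1 : star (c * k) * (c * k) ≤ 1 := by
      have : star k * (h * h) * k ≤ star k * ((h + e) * (h + e)) * k := by
        apply star_left_conjugate_le_conjugate
        have : (h + e) * (h + e) - h * h = (2 * ε) • h + e * e := by
          have e2 : e * h = ε • h := (Algebra.smul_def _ _).symm
          have e3 : h * e = ε • h := by rw [← hce.eq, e2]
          rw [add_mul, mul_add, mul_add, e2, e3, two_mul, add_smul]; abel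
        rw [← sub_nonneg, this]
        have : 0 ≤ e * e := by
          have := star_mul_self_nonneg e
          rwa [he0.isSelfAdjoint.star_eq] at this
        have : 0 ≤ (2 * ε) • h := smul_nonneg (by positivity) hh0
        positivity
      calc star (c * k) * (c * k) = star k * (h * h) * k := by
            rw [hh2]; simp [mul_assoc]
        _ ≤ _ := this
        _ = 1 := by
          rw [hks, ← mul_assoc, hk1, one_mul, hk2]
    have h2 : ‖star (c * k) * (c * k)‖ ≤ 1 :=
      (CStarAlgebra.norm_le_one_iff_of_nonneg _ (star_mul_self_nonneg _)).2 h1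
    rw [CStarRing.norm_star_mul_self] at h2
    nlinarith [norm_nonneg (c * k)]
  · rw [mul_assoc, hk1, mul_one]
  · have : star (c * k) * c = h - e + ε ^ 2 • k := by
      rw [star_mul, hks, mul_assoc, ← hh2]
      have h3 : h - e = k * ((h + e) * (h - e)) := by rw [← mul_assoc, hk1, one_mul]
      have h4 : ε ^ 2 • k = k * (e * e) := by
        rw [he, ← map_mul, ← Algebra.commutes, ← Algebra.smul_def, sq]
      rw [h3, h4, ← mul_add]
      congr 1
      rw [mul_sub, add_mul, add_mul, hce.eq]; abel
    rw [this]
    exact le_add_of_nonneg_right (smul_nonneg (by positivity) hk0)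

theorem tye_norm_le_abs {A : Type*} [CStarAlgebra A] [PartialOrder A] [StarOrderedRing A]
    (τ : A →ₗ[ℂ] ℂ) (hτ1 : τ 1 = 1) (hpos : ∀ a : A, 0 ≤ a → 0 ≤ τ a)
    (htr : ∀ x y : A, τ (x * y) = τ (y * x))
    (w c : A) (hw : ‖w‖ ≤ 1) : ‖τ (w * c)‖ ≤ (τ (CStarAbs c)).re := by
  refine le_of_forall_pos_le_add fun ε hε => ?_
  obtain ⟨v, hv, hc, -⟩ := tye_polar c ε hε
  have h0 : 0 ≤ CStarAbs c + algebraMap ℝ A ε :=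
    add_nonneg (CFC.sqrt_nonneg _) (algebraMap_nonneg _ hε.le)
  have h1 := tye_norm_le τ hpos htr (w * v) _ ((norm_mul_le _ _).trans
    (mul_le_one₀ hw (norm_nonneg _) hv)) h0
  rw [mul_assoc, ← hc] at h1
  have h2 : τ (algebraMap ℝ A ε) = ε := by
    rw [IsScalarTower.algebraMap_apply ℝ ℂ A, Algebra.algebraMap_eq_smul_one, map_smul, hτ1]; simp
  rw [map_add, h2] at h1
  simpa using h1

theorem tye_attain {A : Type*} [CStarAlgebra A] [PartialOrder A] [StarOrderedRing A]
    (τ : A →ₗ[ℂ] ℂ) (hτ1 : τ 1 = 1) (hpos : ∀ a : A, 0 ≤ a → 0 ≤ τ a)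
    (c : A) (ε : ℝ) (hε : 0 < ε) :
    ∃ v : A, ‖v‖ ≤ 1 ∧ (τ (CStarAbs c)).re - ε ≤ (τ (star v * c)).re := by
  obtain ⟨v, hv, -, hc⟩ := tye_polar c ε hε
  refine ⟨v, hv, ?_⟩
  have h1 := tye_re_mono τ hpos _ _ hc
  have h2 : τ (algebraMap ℝ A ε) = ε := by
    rw [IsScalarTower.algebraMap_apply ℝ ℂ A, Algebra.algebraMap_eq_smul_one, map_smul, hτ1]; simp
  rw [map_sub, h2] at h1
  simpa using h1

theorem tye_norm_le' {A : Type*} [CStarAlgebra A] [PartialOrder A] [StarOrderedRing A]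
    (τ : A →ₗ[ℂ] ℂ) (hpos : ∀ a : A, 0 ≤ a → 0 ≤ τ a)
    (htr : ∀ x y : A, τ (x * y) = τ (y * x))
    (w h : A) (hh : 0 ≤ h) : (τ (h * w)).re ≤ ‖w‖ * (τ h).re := by
  rw [htr]
  refine (Complex.re_le_norm _).trans ?_
  by_cases h0 : w = 0
  · simp [h0]
  have hn : (0 : ℝ) < ‖w‖ := norm_pos_iff.2 h0
  have h1 := tye_norm_le τ hpos htr ((‖w‖ : ℂ)⁻¹ • w) h
    (by rw [norm_smul]; simp [h0]) hh
  rw [smul_mul_assoc, map_smul, norm_smul] at h1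
  simp only [norm_inv, Complex.norm_real, norm_norm] at h1
  rwa [inv_mul_le_iff₀ hn] at h1

theorem tye_mid {A : Type*} [CStarAlgebra A] [PartialOrder A] [StarOrderedRing A]
    (τ : A →ₗ[ℂ] ℂ) (hτ1 : τ 1 = 1) (hpos : ∀ a : A, 0 ≤ a → 0 ≤ τ a)
    (htr : ∀ x y : A, τ (x * y) = τ (y * x))
    (hf : ∀ a : A, 0 ≤ a → τ a = 0 → a = 0)
    (c d : A) (hc : star c = c) (hd : star d = d)
    (H : (τ (c * c)).re + (τ (d * d)).re ≤ 2 * (τ (CStarAbs (c * d))).re) : c * c = d * d := by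
  obtain ⟨w, hw⟩ : ∃ w, w = c * c - d * d := ⟨_, rfl⟩
  have hws : star w = w := by simp [hw, hc, hd]
  obtain ⟨K, hK⟩ : ∃ K, K = (τ (star (d * w) * (d * w))).re := ⟨_, rfl⟩
  have hK0 : 0 ≤ K := hK ▸ tye_re_nonneg τ hpos _ (star_mul_self_nonneg _)
  have key : ∀ η : ℝ, 0 < η → η ≤ 1 → (τ (w * w)).re ≤ η ^ 2 * (4 * ‖w‖ + 2 + K) := by
    intro η h0 h1
    obtain ⟨v, hv, hvc⟩ := tye_attain τ hτ1 hpos (c * d) (η ^ 4) (by positivity)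
    obtain ⟨r, hr⟩ : ∃ r, r = star v * c - d := ⟨_, rfl⟩
    obtain ⟨h, hh⟩ : ∃ h, h = c * c - c * v * star v * c := ⟨_, rfl⟩
    have hr0 := tye_re_nonneg τ hpos _ (star_mul_self_nonneg r)
    have hhpos : 0 ≤ h := by
      have h2 := star_left_conjugate_le_conjugate
        (tye_star_mul_le_one (star v) (by simpa using hv)) c
      rw [hh, sub_nonneg]
      simpa [mul_assoc, hc] using h2
    have hh0 := tye_re_nonneg τ hpos _ hhpos
    have e1 : (τ (star r * r)).re + (τ h).re =
        (τ (c * c)).re + (τ (d * d)).re - 2 * (τ (star v * (c * d))).re := by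
      have a1 : (τ (d * (star v * c))).re = (τ (star v * (c * d))).re := by
        rw [htr, mul_assoc]
      have a2 : (τ (c * (v * d))).re = (τ (star v * (c * d))).re := by
        rw [← a1, ← tye_star_re τ hpos]
        simp [hc, hd, mul_assoc]
      have : star r * r + h = c * c + d * d - d * (star v * c) - c * (v * d) := by
        rw [hr, hh]; simp only [star_sub, star_mul, star_star, hc, hd]; noncomm_ring
      have := congrArg (fun x => (τ x).re) this
      simp only [map_add, map_sub, Complex.add_re, Complex.sub_re] at this
      linarith
    have e2 : w = h + (star r * d + d * r + star r * r) := by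
      rw [hw, hr, hh]; simp only [star_sub, star_mul, star_star, hc, hd]; noncomm_ring
    have e3 : (τ (w * w)).re = (τ (h * w)).re + (τ (star r * (d * w))).re
        + (τ (d * r * w)).re + (τ (star r * r * w)).re := by
      conv_lhs => enter [1, 2, 1]; rw [e2]
      simp only [add_mul, map_add, Complex.add_re, mul_assoc]; ring
    have e4 : (τ (d * r * w)).re = (τ (star r * (d * w))).re := by
      rw [mul_assoc, htr, ← tye_star_re τ hpos]
      simp only [star_mul, hd, hws]
      rw [← mul_assoc, htr]
    have e5 := tye_norm_le' τ hpos htr w h hhpos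
    have e6 := tye_norm_le' τ hpos htr w _ (star_mul_self_nonneg r)
    have e7 : 2 * (τ (star r * (d * w))).re ≤ η⁻¹ ^ 2 * (τ (star r * r)).re + η ^ 2 * K := by
      have := tye_amgm τ hpos (((η⁻¹ : ℝ) : ℂ) • r) ((η : ℂ) • (d * w))
      rw [hK]
      simp only [star_smul, smul_mul_assoc, mul_smul_comm, map_smul, smul_smul] at this
      simp only [RCLike.star_def, Complex.conj_ofReal, smul_eq_mul, ← Complex.ofReal_mul,
        Complex.re_ofReal_mul] at this
      rw [mul_inv_cancel₀ h0.ne'] at this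
      simpa [sq] using this
    have e8 : η⁻¹ ^ 2 * (τ (star r * r)).re ≤ 2 * η ^ 2 := by
      rw [inv_pow, inv_mul_le_iff₀ (by positivity)]
      nlinarith
    have hsum : (τ (star r * r)).re + (τ h).re ≤ 2 * η ^ 4 := by linarith
    have e9 : ‖w‖ * ((τ (star r * r)).re + (τ h).re) ≤ ‖w‖ * (2 * η ^ 2) := by
      apply mul_le_mul_of_nonneg_left _ (norm_nonneg _)
      have : η ^ 4 ≤ η ^ 2 := pow_le_pow_of_le_one h0.le h1 (by norm_num)
      linarith
    have : 0 ≤ ‖w‖ * η ^ 2 := by positivity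
    nlinarith
  have hle : (τ (w * w)).re ≤ 0 := by
    by_contra hcon
    push Not at hcon
    set M := 4 * ‖w‖ + 2 + K with hM
    have hMpos : 0 < M := by positivity
    have hb := key (min 1 ((τ (w * w)).re / (2 * M))) (by positivity) (min_le_left _ _)
    set η := min 1 ((τ (w * w)).re / (2 * M)) with hη
    have hη0 : 0 < η := by positivity
    have hη1 : η ≤ 1 := min_le_left _ _
    have hη2 : η ≤ (τ (w * w)).re / (2 * M) := min_le_right _ _
    rw [le_div_iff₀ (by positivity)] at hη2
    nlinarith [mul_pos hη0 hMpos, mul_nonneg hη0.le (sub_nonneg.2 hη1)]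
  have hww : 0 ≤ w * w := by
    have := star_mul_self_nonneg w
    rwa [hws] at this
  have hz := Complex.le_def.1 (hpos _ hww)
  have h0 : w * w = 0 := hf _ hww (Complex.ext (le_antisymm hle hz.1) hz.2.symm)
  have hw0 : w = 0 := by
    rw [← CStarRing.star_mul_self_eq_zero_iff, hws, h0]
  exact sub_eq_zero.1 (hw ▸ hw0)

theorem tye_exp_split {A : Type*} [CStarAlgebra A] (X : A) (hX : IsSelfAdjoint X) (z : ℂ) :
    ∃ U : A, ‖U‖ ≤ 1 ∧ NormedSpace.exp (z • X) = U * NormedSpace.exp ((z.re : ℂ) • X) ∧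
      NormedSpace.exp (z • X) = NormedSpace.exp ((z.re : ℂ) • X) * U := by
  let +nondep : NormedAlgebra ℚ A := .restrictScalars ℚ ℂ A
  have hiX : IsSelfAdjoint ((z.im : ℂ) • X) := by
    rw [IsSelfAdjoint, star_smul, hX.star_eq]; simp
  have hU := (selfAdjoint.expUnitary (⟨(z.im : ℂ) • X, hiX⟩ : selfAdjoint A)).2
  rw [selfAdjoint.expUnitary_coe] at hU
  simp only [smul_smul] at hU
  refine ⟨NormedSpace.exp ((Complex.I * z.im) • X), ?_, ?_, ?_⟩
  · rcases subsingleton_or_nontrivial A with h | h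
    · rw [Subsingleton.elim (NormedSpace.exp ((Complex.I * z.im) • X)) 0]; simp
    · exact (CStarRing.norm_of_mem_unitary hU).le
  · rw [← NormedSpace.exp_add_of_commute
      (((Commute.refl X).smul_left _).smul_right _), ← add_smul]
    congr 2
    rw [add_comm, mul_comm]; exact (Complex.re_add_im z).symm
  · rw [← NormedSpace.exp_add_of_commute
      (((Commute.refl X).smul_left _).smul_right _), ← add_smul]
    congr 2
    rw [mul_comm]; exact (Complex.re_add_im z).symm

theorem tye_exp_convex {A : Type*} [CStarAlgebra A] [PartialOrder A] [StarOrderedRing A]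
    (τ : A →ₗ[ℂ] ℂ) (hτ1 : τ 1 = 1) (hpos : ∀ a : A, 0 ≤ a → 0 ≤ τ a)
    (htr : ∀ x y : A, τ (x * y) = τ (y * x))
    (X Y : A) (hX : IsSelfAdjoint X) (hY : IsSelfAdjoint Y)
    (C : ℝ → A) (hC : ∀ s : ℝ, C s = NormedSpace.exp ((s : ℂ) • X) *
      NormedSpace.exp (((1 - s : ℝ) : ℂ) • Y))
    (l m u : ℝ) (hlm : l ≤ m) (hmu : m ≤ u) (hlu : l < u) :
    (τ (CStarAbs (C m))).re ≤ (1 - (m - l) / (u - l)) * (τ (CStarAbs (C l))).re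
      + (m - l) / (u - l) * (τ (CStarAbs (C u))).re := by
  have hg : ∀ s, 0 ≤ (τ (CStarAbs (C s))).re := fun s =>
    tye_re_nonneg τ hpos _ (CFC.sqrt_nonneg _)
  obtain ⟨K, hK⟩ := PositiveLinearMap.exists_norm_apply_le (PositiveLinearMap.mk₀ τ hpos)
  have hK' : ∀ x, ‖τ x‖ ≤ K * ‖x‖ := hK
  let Φ : A →L[ℂ] ℂ := τ.mkContinuous K hK'
  have hΦ : ∀ x, Φ x = τ x := fun x => rfl
  have hdX : ∀ X : A, Differentiable ℂ (fun z : ℂ => NormedSpace.exp (z • X)) := fun X z =>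
    (hasDerivAt_exp_smul_const (𝕂 := ℂ) X z).differentiableAt
  have hCc : Continuous C := by
    have : C = fun s : ℝ => NormedSpace.exp ((s : ℂ) • X) *
      NormedSpace.exp (((1 - s : ℝ) : ℂ) • Y) := funext hC
    rw [this]
    exact ((hdX X).continuous.comp Complex.continuous_ofReal).mul
      ((hdX Y).continuous.comp (Complex.continuous_ofReal.comp (continuous_const.sub continuous_id)))
  refine le_of_forall_pos_le_add fun ε hε => ?_
  obtain ⟨v, hv, hvc⟩ := tye_attain τ hτ1 hpos (C m) ε hε
  let f : ℂ → ℂ := fun z => Φ (star v * (NormedSpace.exp (z • X) * NormedSpace.exp ((1 - z) • Y)))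
  have hfd : Differentiable ℂ f := by
    apply Φ.differentiable.comp
    apply Differentiable.const_mul
    apply (hdX X).mul
    exact (hdX Y).comp (g := fun z : ℂ => NormedSpace.exp (z • Y)) (f := fun z => 1 - z)
      ((differentiable_const _).sub differentiable_id)
  have hfs : ∀ z, ∃ W : A, ‖W‖ ≤ 1 ∧ f z = τ (W * C z.re) := by
    intro z
    obtain ⟨U, hU, hU1, -⟩ := tye_exp_split X hX z
    obtain ⟨V, hV, -, hV2⟩ := tye_exp_split Y hY (1 - z)
    refine ⟨V * star v * U, ?_, ?_⟩
    · refine (norm_mul_le _ _).trans (mul_le_one₀ ((norm_mul_le _ _).trans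
        (mul_le_one₀ hV (norm_nonneg _) (by simpa using hv))) (norm_nonneg _) hU)
    · simp only [f, hΦ]
      rw [hU1, hV2, hC]
      have e : ((1 - z).re : ℂ) = ((1 - z.re : ℝ) : ℂ) := by simp
      rw [e, mul_assoc V, mul_assoc V, htr V]
      simp only [mul_assoc]
  have hfb : ∀ z, ‖f z‖ ≤ (τ (CStarAbs (C z.re))).re := by
    intro z
    obtain ⟨W, hW, h⟩ := hfs z
    rw [h]
    exact tye_norm_le_abs τ hτ1 hpos htr W _ hW
  have hB : BddAbove ((norm ∘ f) '' Complex.HadamardThreeLines.verticalClosedStrip l u) := by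
    obtain ⟨M, hM⟩ := (isCompact_Icc (a := l) (b := u)).exists_bound_of_continuousOn
      hCc.continuousOn
    refine ⟨K * M, ?_⟩
    rintro _ ⟨z, hz, rfl⟩
    obtain ⟨W, hW, h⟩ := hfs z
    simp only [Function.comp, h]
    refine (hK' _).trans (mul_le_mul_of_nonneg_left ?_ K.2)
    refine (norm_mul_le _ _).trans ?_
    have := hM z.re hz
    nlinarith [norm_nonneg W, norm_nonneg (C z.re)]
  have h3 := Complex.HadamardThreeLines.norm_le_interp_of_mem_verticalClosedStrip' (f := f)
    (z := (m : ℂ)) (a := (τ (CStarAbs (C l))).re) (b := (τ (CStarAbs (C u))).re) hlu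
    (show (m : ℂ).re ∈ Set.Icc l u from ⟨hlm, hmu⟩) hfd.diffContOnCl hB
    (fun z hz => by have := hfb z; rwa [show z.re = l from hz] at this)
    (fun z hz => by have := hfb z; rwa [show z.re = u from hz] at this)
  have hul : 0 < u - l := sub_pos.2 hlu
  have h4 := Real.geom_mean_le_arith_mean2_weighted
    (w₁ := 1 - (m - l) / (u - l)) (w₂ := (m - l) / (u - l))
    (by rw [sub_nonneg, div_le_one hul]; linarith)
    (div_nonneg (by linarith) hul.le) (hg l) (hg u) (by ring)
  have h5 : (τ (star v * C m)).re ≤ ‖f m‖ := by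
    have : f m = τ (star v * C m) := by
      simp only [f, hΦ, hC]
      norm_num
    rw [this]; exact Complex.re_le_norm _
  simp only [Complex.ofReal_re] at h3
  linarith

theorem tye_rpow_exp {A : Type*} [CStarAlgebra A] [PartialOrder A] [StarOrderedRing A]
    (a : A) (ha : IsStrictlyPositive a) (s : ℝ) :
    a ^ s = NormedSpace.exp ((s : ℂ) • CFC.log a) := by
  have h2 : ∀ x ∈ spectrum ℝ a, x ≠ 0 := by grind
  have h3 : ((s : ℂ) • CFC.log a) = cfc (fun x => s * Real.log x) a := by
    rw [cfc_const_mul s Real.log a (by fun_prop (disch := assumption))]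
    exact Complex.coe_smul s _
  have hp : ∀ x ∈ spectrum ℝ a, 0 < x := by
    intro x hx
    exact lt_of_le_of_ne (spectrum_nonneg_of_nonneg ha.nonneg hx) (h2 x hx).symm
  rw [h3, ← CFC.real_exp_eq_normedSpace_exp (cfc_predicate _ a), CFC.rpow_eq_cfc_real ha.nonneg,
    ← cfc_comp' Real.exp (fun x => s * Real.log x) a (by fun_prop)
      (by fun_prop (disch := assumption))]
  refine cfc_congr fun x hx => ?_
  rw [Real.rpow_def_of_pos (hp x hx), mul_comm]

theorem tye_pos_convex {A : Type*} [CStarAlgebra A] [PartialOrder A] [StarOrderedRing A]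
    (τ : A →ₗ[ℂ] ℂ) (hτ1 : τ 1 = 1) (hpos : ∀ a : A, 0 ≤ a → 0 ≤ τ a)
    (htr : ∀ x y : A, τ (x * y) = τ (y * x))
    (a b : A) (ha : IsStrictlyPositive a) (hb : IsStrictlyPositive b)
    (l m u : ℝ) (hlm : l ≤ m) (hmu : m ≤ u) (hlu : l < u) :
    (τ (CStarAbs (a ^ m * b ^ (1 - m)))).re ≤
      (1 - (m - l) / (u - l)) * (τ (CStarAbs (a ^ l * b ^ (1 - l)))).re
      + (m - l) / (u - l) * (τ (CStarAbs (a ^ u * b ^ (1 - u)))).re :=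
  tye_exp_convex τ hτ1 hpos htr (CFC.log a) (CFC.log b) .log .log
    (fun s => a ^ s * b ^ (1 - s))
    (fun s => by rw [tye_rpow_exp a ha, tye_rpow_exp b hb]) l m u hlm hmu hlu

theorem tye_rpow_tendsto {A : Type*} [CStarAlgebra A] [PartialOrder A] [StarOrderedRing A]
    (a : A) (ha : 0 ≤ a) (s : ℝ) (hs : 0 ≤ s) :
    Filter.Tendsto (fun ε : ℝ => (a + algebraMap ℝ A ε) ^ s) (nhdsWithin 0 (Set.Ioi 0))
      (nhds (a ^ s)) := by
  have h1 : ContinuousOn (fun x : A => x ^ s) {a : A | 0 ≤ a} := by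
    rcases hs.eq_or_lt with rfl | h
    · exact (continuousOn_const (c := (1 : A))).congr fun x hx => CFC.rpow_zero x hx
    · refine (CFC.continuousOn_nnrpow (A := A) ⟨s, hs⟩).congr fun x hx => ?_
      exact (CFC.nnrpow_eq_rpow (a := x) (x := ⟨s, hs⟩) h).symm
  refine (h1 a ha).tendsto.comp (tendsto_nhdsWithin_iff.2 ⟨?_, ?_⟩)
  · have : Continuous fun ε : ℝ => a + algebraMap ℝ A ε :=
      continuous_const.add (continuous_algebraMap ℝ A)
    have h := this.tendsto 0
    simp only [map_zero, add_zero] at h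
    exact h.mono_left nhdsWithin_le_nhds
  · filter_upwards [self_mem_nhdsWithin] with ε hε
    exact add_nonneg ha (algebraMap_nonneg _ (le_of_lt hε))

theorem tye_abs_tendsto {A : Type*} [CStarAlgebra A] [PartialOrder A] [StarOrderedRing A]
    (τ : A →ₗ[ℂ] ℂ) (hpos : ∀ a : A, 0 ≤ a → 0 ≤ τ a)
    (a b : A) (ha : 0 ≤ a) (hb : 0 ≤ b) (s : ℝ) (hs : 0 ≤ s) (hs1 : s ≤ 1) :
    Filter.Tendsto (fun ε : ℝ => (τ (CStarAbs ((a + algebraMap ℝ A ε) ^ s *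
      (b + algebraMap ℝ A ε) ^ (1 - s)))).re) (nhdsWithin 0 (Set.Ioi 0))
      (nhds (τ (CStarAbs (a ^ s * b ^ (1 - s)))).re) := by
  obtain ⟨K, hK⟩ := PositiveLinearMap.exists_norm_apply_le (PositiveLinearMap.mk₀ τ hpos)
  have hK' : ∀ x, ‖τ x‖ ≤ K * ‖x‖ := hK
  let Φ : A →L[ℂ] ℂ := τ.mkContinuous K hK'
  have h1 := (tye_rpow_tendsto a ha s hs).mul (tye_rpow_tendsto b hb (1 - s) (by linarith))
  have h2 : Continuous (fun z : A => CStarAbs z) := by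
    refine (CFC.continuousOn_sqrt (A := A)).comp_continuous
      (f := fun z : A => star z * z) (continuous_star.mul continuous_id) ?_
    intro z; exact star_mul_self_nonneg z
  exact ((Complex.continuous_re.comp (Φ.continuous.comp h2)).tendsto _).comp h1

theorem tye_convex {A : Type*} [CStarAlgebra A] [PartialOrder A] [StarOrderedRing A]
    (τ : A →ₗ[ℂ] ℂ) (hτ1 : τ 1 = 1) (hpos : ∀ a : A, 0 ≤ a → 0 ≤ τ a)
    (htr : ∀ x y : A, τ (x * y) = τ (y * x))
    (a b : A) (ha : 0 ≤ a) (hb : 0 ≤ b)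
    (l m u : ℝ) (hl : 0 ≤ l) (hu : u ≤ 1) (hlm : l ≤ m) (hmu : m ≤ u) (hlu : l < u) :
    (τ (CStarAbs (a ^ m * b ^ (1 - m)))).re ≤
      (1 - (m - l) / (u - l)) * (τ (CStarAbs (a ^ l * b ^ (1 - l)))).re
      + (m - l) / (u - l) * (τ (CStarAbs (a ^ u * b ^ (1 - u)))).re := by
  refine le_of_tendsto_of_tendsto
    (tye_abs_tendsto τ hpos a b ha hb m (by linarith) (by linarith))
    (((tye_abs_tendsto τ hpos a b ha hb l (by linarith) (by linarith)).const_mul _).add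
      ((tye_abs_tendsto τ hpos a b ha hb u (by linarith) (by linarith)).const_mul _)) ?_
  filter_upwards [self_mem_nhdsWithin] with ε hε
  have hε' : 0 < ε := hε
  have heP : IsStrictlyPositive (algebraMap ℝ A ε) := by cfc_tac
  exact tye_pos_convex τ hτ1 hpos htr _ _ (heP.nonneg_add ha) (heP.nonneg_add hb)
    l m u hlm hmu hlu

theorem tye_abs_nonneg {A : Type*} [CStarAlgebra A] [PartialOrder A] [StarOrderedRing A]
    (a : A) (ha : 0 ≤ a) : CStarAbs a = a := by
  rw [CStarAbs, ha.isSelfAdjoint.star_eq, CFC.sqrt_mul_self a ha]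

/-- **Equality in the tracial Young inequality in a C*-algebra.** -/
theorem tracial_young_equality_iff {A : Type*} [CStarAlgebra A] [PartialOrder A] [StarOrderedRing A]
    (τ : A →ₗ[ℂ] ℂ) (hτ1 : τ 1 = 1)
    (hτpos : ∀ a : A, 0 ≤ a → 0 ≤ τ a)
    (hτtr : ∀ x y : A, τ (x * y) = τ (y * x))
    (hτfaithful : ∀ a : A, 0 ≤ a → τ a = 0 → a = 0)
    (p q : ℝ) (hp : 0 < p) (hq : 0 < q) (hpq : 1 / p + 1 / q = 1)
    (a b : A) (ha : 0 ≤ a) (hb : 0 ≤ b) :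
    τ (CStarAbs (a * b)) = (p⁻¹ : ℂ) * τ (a ^ p) + (q⁻¹ : ℂ) * τ (b ^ q) ↔ b ^ q = a ^ p := by
  obtain ⟨x, hx⟩ : ∃ x, x = a ^ p := ⟨_, rfl⟩
  obtain ⟨y, hy⟩ : ∃ y, y = b ^ q := ⟨_, rfl⟩
  have hx0 : 0 ≤ x := hx ▸ CFC.rpow_nonneg
  have hy0 : 0 ≤ y := hy ▸ CFC.rpow_nonneg
  have hq1 : 1 - 1 / p = 1 / q := by linarith
  have hax : x ^ (1 / p) = a := by
    rw [hx, CFC.rpow_rpow_of_exponent_nonneg a _ _ hp.le (by positivity) ha,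
      mul_one_div_cancel hp.ne', CFC.rpow_one a ha]
  have hby : y ^ (1 - 1 / p) = b := by
    rw [hq1, hy, CFC.rpow_rpow_of_exponent_nonneg b _ _ hq.le (by positivity) hb,
      mul_one_div_cancel hq.ne', CFC.rpow_one b hb]
  have hpos1 : 0 < 1 / p := by positivity
  have hpos2 : 0 < 1 / q := by positivity
  have hadd : ∀ z : A, 0 ≤ z → ∀ s t : ℝ, 0 < s → 0 < t → z ^ s * z ^ t = z ^ (s + t) := by
    intro z hz s t hs ht
    lift s to NNReal using hs.le
    lift t to NNReal using ht.le
    have hs' : 0 < s := by exact_mod_cast hs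
    have ht' : 0 < t := by exact_mod_cast ht
    rw [← NNReal.coe_add, ← CFC.nnrpow_eq_rpow hs', ← CFC.nnrpow_eq_rpow ht',
      ← CFC.nnrpow_eq_rpow (add_pos hs' ht'), CFC.nnrpow_add hs' ht']
  rw [← hx, ← hy]
  constructor
  · intro H
    have H' := congrArg Complex.re H
    rw [← Complex.ofReal_inv, ← Complex.ofReal_inv, Complex.add_re, Complex.re_ofReal_mul,
      Complex.re_ofReal_mul] at H'
    have hsq : ∀ z : A, 0 ≤ z → z ^ (1 / 2 : ℝ) * z ^ (1 / 2 : ℝ) = z := by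
      intro z hz
      rw [hadd z hz _ _ (by norm_num) (by norm_num)]
      norm_num
      exact CFC.rpow_one z hz
    suffices hm : (τ x).re + (τ y).re ≤
        2 * (τ (CStarAbs (x ^ (1 / 2 : ℝ) * y ^ (1 / 2 : ℝ)))).re by
      have := tye_mid τ hτ1 hτpos hτtr hτfaithful (x ^ (1 / 2 : ℝ)) (y ^ (1 / 2 : ℝ))
        (CFC.rpow_nonneg (a := x)).isSelfAdjoint (CFC.rpow_nonneg (a := y)).isSelfAdjoint
        (by rw [hsq x hx0, hsq y hy0]; exact hm)
      rw [hsq x hx0, hsq y hy0] at this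
      exact this.symm
    have hqq : q⁻¹ = 1 - 1 / p := by rw [hq1]; simp
    have hpp : p⁻¹ = 1 / p := by simp
    rw [hqq, hpp] at H'
    obtain ⟨t, ht⟩ : ∃ t, t = 1 / p := ⟨_, rfl⟩
    rw [← ht] at H' hax hby hpos1 hq1
    have hhalf : (1 - 1 / 2 : ℝ) = 1 / 2 := by norm_num
    rcases le_total t (1 / 2) with h | h
    · have h1 := tye_convex τ hτ1 hτpos hτtr x y hx0 hy0 0 t (1 / 2) le_rfl (by norm_num)
        hpos1.le h (by norm_num)
      simp only [sub_zero] at h1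
      rw [hax, hby, CFC.rpow_zero x hx0, one_mul, CFC.rpow_one y hy0,
        tye_abs_nonneg y hy0, hhalf, H'] at h1
      rw [show t / (1 / 2) = 2 * t by ring] at h1
      nlinarith
    · have h1 := tye_convex τ hτ1 hτpos hτtr x y hx0 hy0 (1 / 2) t 1 (by norm_num) le_rfl
        h (by linarith) (by norm_num)
      rw [hax, hby, sub_self, CFC.rpow_zero y hy0, mul_one, CFC.rpow_one x hx0,
        tye_abs_nonneg x hx0, hhalf, H'] at h1
      rw [show (t - 1 / 2) / (1 / 2) = 2 * t - 1 by ring] at h1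
      have : 0 < 1 - t := by linarith
      nlinarith
  · intro hxy
    have hab : a * b = x := by
      rw [← hax, ← hby, hxy, hadd x hx0 _ _ hpos1 (by linarith)]
      rw [show 1 / p + (1 - 1 / p) = 1 by ring, CFC.rpow_one x hx0]
    rw [hab, hxy, tye_abs_nonneg x hx0, ← add_mul]
    have : ((p : ℂ)⁻¹ + (q : ℂ)⁻¹) = 1 := by
      have : p⁻¹ + q⁻¹ = 1 := by simpa using hpq
      exact_mod_cast this
    rw [this, one_mul]
end

section
/- Let A be a unital C*-algebra carrying a faithful tracial state τ. If positive elements a, b ∈ A satisfy τ(|ab|) = (1/2) τ(a²) + (1/2) τ(b²), then b = a. -/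
open scoped ComplexOrder

theorem young_aux_contr {A : Type*} [CStarAlgebra A] [PartialOrder A]
    [StarOrderedRing A] (z h : A) (hh : 0 ≤ h) (hz : star z * z = h * h) (e : ℝ) (he : 0 < e) :
    ∃ u : A, u * star u ≤ 1 ∧ h - star u * z ≤ algebraMap ℝ A e := by
  have hsp : ∀ t ∈ spectrum ℝ h, 0 ≤ t := fun t ht => spectrum_nonneg_of_nonneg hh ht
  have hsa : IsSelfAdjoint h := IsSelfAdjoint.of_nonneg hh
  have hF : ContinuousOn (fun t : ℝ => (t + e)⁻¹) (spectrum ℝ h) := by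
    apply ContinuousOn.inv₀ (by fun_prop)
    intro t ht
    have := hsp t ht
    positivity
  set f : A := cfc (fun t : ℝ => (t + e)⁻¹) h with hf
  have hfs : star f = f := (cfc_predicate (fun t : ℝ => (t + e)⁻¹) h : IsSelfAdjoint f)
  have hid : h = cfc (fun t : ℝ => t) h := (cfc_id' ℝ h).symm
  have e1 : f * (h * h) = cfc (fun t : ℝ => (t + e)⁻¹ * (t * t)) h := by
    rw [cfc_mul _ _ h hF (by fun_prop), cfc_mul _ _ h (by fun_prop) (by fun_prop), ← hid]
  have e2 : f * (h * h) * f = cfc (fun t : ℝ => (t + e)⁻¹ * (t * t) * (t + e)⁻¹) h := by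
    rw [cfc_mul _ _ h (by fun_prop) hF, ← e1]
  refine ⟨z * f, ?_, ?_⟩
  · have h1 : star (z * f) * (z * f) ≤ 1 := by
      have : star (z * f) * (z * f) = f * (h * h) * f := by
        rw [← hz, star_mul, hfs]; simp only [mul_assoc]
      rw [this, e2]
      apply cfc_le_one
      intro t ht
      have := hsp t ht
      rw [← div_eq_inv_mul, ← div_eq_mul_inv, div_div, div_le_one (by positivity)]
      nlinarith
    have h2 : ‖z * f‖ ≤ 1 := by
      have h3 := (CStarAlgebra.norm_le_one_iff_of_nonneg (star (z * f) * (z * f))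
        (star_mul_self_nonneg _)).2 h1
      rw [CStarRing.norm_star_mul_self] at h3
      nlinarith [norm_nonneg (z * f)]
    rw [← CStarAlgebra.norm_le_one_iff_of_nonneg _ (mul_star_self_nonneg _),
      CStarRing.norm_self_mul_star]
    nlinarith [norm_nonneg (z * f)]
  · have : h - star (z * f) * z = cfc (fun t : ℝ => t - (t + e)⁻¹ * (t * t)) h := by
      rw [cfc_sub _ _ h (by fun_prop) (by fun_prop), ← e1, ← hid, ← hz, star_mul, hfs, mul_assoc]
    rw [this]
    apply cfc_le_algebraMap
    · intro t ht
      have := hsp t ht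
      have h4 : t - (t + e)⁻¹ * (t * t) = t * e / (t + e) := by field_simp; ring
      rw [h4, div_le_iff₀ (by positivity)]
      nlinarith
    · exact ContinuousOn.sub (by fun_prop) (hF.mul (by fun_prop))
    · exact hsa

theorem young_aux_norm {A : Type*} [CStarAlgebra A] [PartialOrder A]
    [StarOrderedRing A] (ρ : A →ₗ[ℝ] ℝ) (hpos : ∀ a : A, 0 ≤ a → 0 ≤ ρ a)
    (htr : ∀ x y : A, ρ (x * y) = ρ (y * x)) (c w : A) (hc : IsSelfAdjoint c) (hw : 0 ≤ w) :
    ρ (c * w) ≤ ‖c‖ * ρ w := by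
  have hs : 0 ≤ CFC.sqrt w := CFC.sqrt_nonneg w
  have hss : CFC.sqrt w * CFC.sqrt w = w := CFC.sqrt_mul_sqrt_self w hw
  have hsa : star (CFC.sqrt w) = CFC.sqrt w := IsSelfAdjoint.of_nonneg hs
  have h1 := CStarAlgebra.star_left_conjugate_le_norm_smul (a := CFC.sqrt w) (b := c) (hb := hc)
  rw [hsa, hss] at h1
  have h2 := hpos _ (sub_nonneg.2 h1)
  rw [map_sub, map_smul, smul_eq_mul, htr, ← mul_assoc, hss, htr w c] at h2
  linarith

theorem young_aux_key {A : Type*} [CStarAlgebra A] [PartialOrder A]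
    [StarOrderedRing A] (ρ : A →ₗ[ℝ] ℝ) (hpos : ∀ a : A, 0 ≤ a → 0 ≤ ρ a) (h1 : ρ 1 = 1)
    (htr : ∀ x y : A, ρ (x * y) = ρ (y * x)) (hst : ∀ x : A, ρ (star x) = ρ x)
    (a b h : A) (ha : 0 ≤ a) (hb : 0 ≤ b)
    (hh : 0 ≤ h) (hz : star (a * b) * (a * b) = h * h)
    (heq : 2 * ρ h = ρ (a * a) + ρ (b * b)) (s : ℝ) (hs : 0 < s) :
    ρ ((a * a - b * b) * (a * a - b * b)) ≤ 4 * ‖a * a - b * b‖ * s ^ 2 +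
      s * (ρ (star ((a * a - b * b) * b) * ((a * a - b * b) * b)) + 2) := by
  obtain ⟨u, hu, hu2⟩ := young_aux_contr (a * b) h hh hz (s ^ 2) (by positivity)
  have has : star a = a := IsSelfAdjoint.of_nonneg ha
  have hbs : star b = b := IsSelfAdjoint.of_nonneg hb
  set c := a * a - b * b with hc
  have hcs : star c = c := by simp [hc, has, hbs]
  set d := b - a * u with hd
  set w := a * (1 - u * star u) * a with hw
  have hw0 : 0 ≤ w := by
    have := star_left_conjugate_nonneg (sub_nonneg.2 hu) a
    rwa [has] at this
  have hds : star d = b - star u * a := by simp [hd, has, hbs]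
  have hwp := hpos _ hw0
  have hdp := hpos _ (star_mul_self_nonneg d)
  have hE : ρ h - ρ (star u * (a * b)) ≤ s ^ 2 := by
    have := hpos _ (sub_nonneg.2 hu2)
    rw [map_sub, Algebra.algebraMap_eq_smul_one, map_smul, h1, map_sub] at this
    simpa using this
  have hsum : ρ (star d * d) + ρ w = ρ (a * a) + ρ (b * b) - 2 * ρ (star u * (a * b)) := by
    have k1 : star d * d = b * b - star (star u * (a * b)) - star u * (a * b)
        + star u * a * (a * u) := by
      rw [hds]; simp only [hd, star_mul, has, hbs, star_star]; noncomm_ring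
    have k2 : w = a * a - (a * u) * (star u * a) := by rw [hw]; noncomm_ring
    rw [k1, k2]
    simp only [map_sub, map_add, hst]
    rw [htr (a * u)]; ring
  have hdb : ρ (star d * d) ≤ 2 * s ^ 2 := by linarith
  have hwb : ρ w ≤ 2 * s ^ 2 := by linarith
  have hcc : c = w - d * b - b * star d + d * star d := by
    rw [hds]; simp only [hc, hw, hd]; noncomm_ring
  have hτ : ρ (c * c) = ρ (c * w) - 2 * ρ (star d * (c * b)) + ρ (c * (d * star d)) := by
    have k1 : c * c = c * w - c * d * b - c * b * star d + c * (d * star d) := by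
      conv_lhs => rhs; rw [hcc]
      noncomm_ring
    have k2 : ρ (c * d * b) = ρ (star d * (c * b)) := by
      rw [htr (c * d) b, ← hst]
      simp only [star_mul, hcs, hbs, mul_assoc]
    rw [k1]
    simp only [map_sub, map_add]
    rw [k2, htr (c * b)]; ring
  have n1 := young_aux_norm ρ hpos htr c w hcs hw0
  have n2 := young_aux_norm ρ hpos htr c (d * star d) hcs (mul_star_self_nonneg d)
  rw [htr d] at n2
  have n3 := hpos _ (star_mul_self_nonneg (s • (c * b) + d))
  have k3 : star (s • (c * b) + d) * (s • (c * b) + d) = (s * s) • (star (c * b) * (c * b))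
      + s • (star (star d * (c * b))) + s • (star d * (c * b)) + star d * d := by
    simp only [star_add, star_smul, star_trivial, add_mul, mul_add, smul_mul_assoc,
      mul_smul_comm, smul_add, smul_smul, star_mul, star_star]
    abel
  rw [k3] at n3
  simp only [map_add, map_smul, smul_eq_mul, hst] at n3
  have n4 : -2 * ρ (star d * (c * b)) ≤ s * (ρ (star (c * b) * (c * b)) + 2) := by
    refine le_of_mul_le_mul_left ?_ hs
    nlinarith
  have hcn := norm_nonneg c
  have m1 := mul_le_mul_of_nonneg_left hdb hcn
  have m2 := mul_le_mul_of_nonneg_left hwb hcn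
  linarith

/-- **Equality in the tracial arithmetic–geometric mean (p = q = 2) Young inequality.** -/
theorem tracial_young_equality_two {A : Type*} [CStarAlgebra A] [PartialOrder A]
    [StarOrderedRing A]
    (τ : A →ₗ[ℂ] ℂ) (hτ1 : τ 1 = 1)
    (hτpos : ∀ a : A, 0 ≤ a → 0 ≤ τ a)
    (hτtr : ∀ x y : A, τ (x * y) = τ (y * x))
    (hτfaithful : ∀ a : A, 0 ≤ a → τ a = 0 → a = 0)
    (a b : A) (ha : 0 ≤ a) (hb : 0 ≤ b)
    (h : τ (CStarAbs (a * b)) = (1 / 2 : ℂ) * τ (a ^ 2) + (1 / 2 : ℂ) * τ (b ^ 2)) :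
    b = a := by
  let ρ : A →ₗ[ℝ] ℝ := Complex.reLm ∘ₗ (τ.restrictScalars ℝ)
  have hρ : ∀ x, ρ x = (τ x).re := fun x => rfl
  have hpos : ∀ x : A, 0 ≤ x → 0 ≤ ρ x := fun x hx => (Complex.nonneg_iff.1 (hτpos x hx)).1
  have him : ∀ x : A, IsSelfAdjoint x → (τ x).im = 0 := by
    intro x hx
    rw [← CFC.posPart_sub_negPart x hx, map_sub, Complex.sub_im,
      ← (Complex.nonneg_iff.1 (hτpos _ (CFC.posPart_nonneg x))).2,
      ← (Complex.nonneg_iff.1 (hτpos _ (CFC.negPart_nonneg x))).2, sub_zero]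
  have hst : ∀ x : A, ρ (star x) = ρ x := by
    intro x
    have h1 : IsSelfAdjoint (Complex.I • (x - star x)) := by
      rw [IsSelfAdjoint, star_smul, star_sub, star_star]
      simp only [RCLike.star_def, Complex.conj_I, neg_smul, ← smul_neg, neg_sub]
    have h2 := him _ h1
    simp at h2
    simp only [hρ]
    linarith
  have key := young_aux_key ρ hpos (by simp [hρ, hτ1]) (fun x y => by simp [hρ, hτtr x y]) hst
    a b (CStarAbs (a * b)) ha hb (CFC.sqrt_nonneg _)
    (CFC.sqrt_mul_sqrt_self _ (star_mul_self_nonneg _)).symm (by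
      have := congrArg Complex.re h
      rw [show (1 / 2 : ℂ) = ((1 / 2 : ℝ) : ℂ) by push_cast; rfl, Complex.add_re,
        Complex.re_ofReal_mul, Complex.re_ofReal_mul, pow_two, pow_two] at this
      simp only [hρ]
      linarith)
  set c := a * a - b * b with hc
  have has : star a = a := IsSelfAdjoint.of_nonneg ha
  have hbs : star b = b := IsSelfAdjoint.of_nonneg hb
  have hcs : star c = c := by simp [hc, has, hbs]
  have hc0 : 0 ≤ c * c := by
    have := star_mul_self_nonneg c
    rwa [hcs] at this
  have hle : ρ (c * c) ≤ 0 := by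
    set K := ρ (star (c * b) * (c * b))
    have ht : Filter.Tendsto (fun s : ℝ => 4 * ‖c‖ * s ^ 2 + s * (K + 2))
        (nhdsWithin 0 (Set.Ioi 0)) (nhds 0) := by
      have : Continuous (fun s : ℝ => 4 * ‖c‖ * s ^ 2 + s * (K + 2)) := by fun_prop
      have h3 := this.tendsto 0
      simp only [ne_eq, OfNat.ofNat_ne_zero, not_false_eq_true, zero_pow, mul_zero, zero_mul,
        add_zero] at h3
      exact h3.mono_left nhdsWithin_le_nhds
    refine ge_of_tendsto ht ?_
    filter_upwards [self_mem_nhdsWithin] with s hs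
    exact key s hs
  have hτc : τ (c * c) = 0 := by
    apply Complex.ext
    · exact le_antisymm hle (hpos _ hc0)
    · exact (Complex.nonneg_iff.1 (hτpos _ hc0)).2.symm
  have hcc := hτfaithful _ hc0 hτc
  have hcz : c = 0 := by
    rw [← CStarRing.star_mul_self_eq_zero_iff, hcs, hcc]
  have hab : a * a = b * b := sub_eq_zero.1 hcz
  rw [← CFC.sqrt_mul_self b hb, ← hab, CFC.sqrt_mul_self a ha]
end

section
/- Let A be a unital C*-algebra carrying a tracial state τ. Then for all positive elements a, b ∈ A, τ(|ab|^{1/2}) ≤ (τ(a) τ(b))^{1/2} ≤ (1/2)(τ(a) + τ(b)), where all the displayed traces are (nonnegative) real numbers. -/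
open scoped ComplexOrder

theorem trAux_cs {A : Type*} [CStarAlgebra A] [PartialOrder A] [StarOrderedRing A]
    (f : A →ₚ[ℂ] ℂ) (x y : A) :
    ‖f (star x * y)‖ ^ 2 ≤ (f (star x * x)).re * (f (star y * y)).re := by
  have h := norm_inner_le_norm (𝕜 := ℂ) (f.toPreGNS x) (f.toPreGNS y)
  rw [PositiveLinearMap.preGNS_inner_def, PositiveLinearMap.preGNS_norm_def,
    PositiveLinearMap.preGNS_norm_def] at h
  simp only [PositiveLinearMap.ofPreGNS_toPreGNS] at h
  have hx : 0 ≤ (f (star x * x)).re :=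
    (Complex.nonneg_iff.mp (f.map_nonneg (star_mul_self_nonneg x))).1
  have hy : 0 ≤ (f (star y * y)).re :=
    (Complex.nonneg_iff.mp (f.map_nonneg (star_mul_self_nonneg y))).1
  calc _ ≤ (√(f (star x * x)).re * √(f (star y * y)).re) ^ 2 := by gcongr
    _ = _ := by rw [mul_pow, Real.sq_sqrt hx, Real.sq_sqrt hy]

theorem trAux_root {A : Type*} [CStarAlgebra A] [PartialOrder A] [StarOrderedRing A]
    (b : A) (hb : IsStrictlyPositive b) :
    ∃ s t : A, star s = s ∧ star t = t ∧ s * s = b ∧ s * t = 1 ∧ t * s = 1 := by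
  refine ⟨b ^ ((1 : ℝ) / 2), b ^ (-((1 : ℝ) / 2)), ?_, ?_, ?_, ?_, ?_⟩
  · exact (IsSelfAdjoint.of_nonneg CFC.rpow_nonneg).star_eq
  · exact (IsSelfAdjoint.of_nonneg CFC.rpow_nonneg).star_eq
  · rw [← CFC.rpow_add hb.isUnit, add_halves, CFC.rpow_one b hb.nonneg]
  · exact CFC.rpow_mul_rpow_neg _ hb
  · exact CFC.rpow_neg_mul_rpow _ hb

theorem trAux_core {A : Type*} [CStarAlgebra A] [PartialOrder A] [StarOrderedRing A]
    (f : A →ₚ[ℂ] ℂ) (htr : ∀ x y : A, f (x * y) = f (y * x))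
    (a b k : A) (ha : IsStrictlyPositive a) (hb : IsStrictlyPositive b) (hk : star k = k)
    (h : k * k * (k * k) = b * a * a * b) :
    ‖f k‖ ^ 2 ≤ (f a).re * (f b).re := by
  obtain ⟨s, t, hs, ht, hss, hst, hts⟩ := trAux_root b hb
  obtain ⟨r, q, hr, hq, hrr, hrq, hqr⟩ := trAux_root a ha
  have ha0 : 0 ≤ (f a).re := (Complex.nonneg_iff.mp (f.map_nonneg ha.nonneg)).1
  have hb0 : 0 ≤ (f b).re := (Complex.nonneg_iff.mp (f.map_nonneg hb.nonneg)).1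
  have e1 := trAux_cs f (t * k) s
  have e2 := trAux_cs f (q * star (k * k * (t * t))) r
  have btt : b * (t * t) = 1 := by
    rw [← hss, show s * s * (t * t) = s * (s * t) * t by simp only [mul_assoc], hst, mul_one, hst]
  have ttb : t * t * b = 1 := by
    rw [← hss, show t * t * (s * s) = t * (t * s) * s by simp only [mul_assoc], hts, mul_one, hts]
  have i1 : star (t * k) * s = k := by rw [star_mul, ht, hk, mul_assoc, hts, mul_one]
  have i2 : f (star (t * k) * (t * k)) = f (k * k * (t * t)) := by
    rw [star_mul, ht, hk, mul_assoc, htr]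
    rw [show t * (t * k) * k = t * t * (k * k) by simp only [mul_assoc], htr]
  have i3 : star (q * star (k * k * (t * t))) * r = k * k * (t * t) := by
    rw [star_mul, star_star, hq, mul_assoc, hqr, mul_one]
  have i4 : f (star (q * star (k * k * (t * t))) * (q * star (k * k * (t * t)))) = f a := by
    rw [htr]
    congr 1
    simp only [star_mul, star_star, hq, hk, ht]
    calc _ = q * (t * t) * (k * k * (k * k)) * (t * t) * q := by simp only [mul_assoc]
      _ = q * (t * t * b) * a * a * (b * (t * t)) * q := by rw [h]; simp only [mul_assoc]
      _ = q * r * r * r * (r * q) := by rw [ttb, btt, ← hrr]; simp only [mul_assoc, mul_one, one_mul]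
      _ = a := by rw [hqr, hrq, ← hrr]; simp
  rw [i3, i4, hr, hrr] at e2
  rw [i1, i2, hs, hss] at e1
  have e3 : ‖f (k * k * (t * t))‖ ≤ (f a).re := by
    rw [← sq (f a).re] at e2
    exact (sq_le_sq₀ (norm_nonneg _) ha0).mp e2
  refine e1.trans ?_
  exact mul_le_mul_of_nonneg_right ((Complex.re_le_norm _).trans e3) hb0

theorem trAux_lim {A : Type*} [CStarAlgebra A] [PartialOrder A] [StarOrderedRing A]
    (f : A →ₚ[ℂ] ℂ) (htr : ∀ x y : A, f (x * y) = f (y * x))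
    (a b : A) (ha : 0 ≤ a) (hb : 0 ≤ b) :
    ‖f (CFC.sqrt (CStarAbs (a * b)))‖ ^ 2 ≤ (f a).re * (f b).re := by
  have hf : Continuous f := map_continuous f
  have hsq : ∀ g : ℝ → A, Continuous g → (∀ x, 0 ≤ g x) → Continuous fun x => CFC.sqrt (g x) :=
    fun g hg h0 => CFC.continuousOn_sqrt.comp_continuous hg h0
  let A' : ℝ → A := fun e => a + algebraMap ℝ A e
  let B' : ℝ → A := fun e => b + algebraMap ℝ A e
  have hA : Continuous A' := by
    have := continuous_algebraMap ℝ A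
    fun_prop
  have hB : Continuous B' := by
    have := continuous_algebraMap ℝ A
    fun_prop
  have hL : Continuous fun e => ‖f (CFC.sqrt (CStarAbs (A' e * B' e)))‖ ^ 2 := by
    have : Continuous fun e => CFC.sqrt (CStarAbs (A' e * B' e)) := by
      apply hsq
      · apply hsq
        · fun_prop
        · intro x; exact star_mul_self_nonneg _
      · intro x; exact CFC.sqrt_nonneg _
    fun_prop
  have hR : Continuous fun e => (f (A' e)).re * (f (B' e)).re := by
    have := Complex.continuous_re
    fun_prop
  have key : ∀ e > 0, ‖f (CFC.sqrt (CStarAbs (A' e * B' e)))‖ ^ 2 ≤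
      (f (A' e)).re * (f (B' e)).re := by
    intro e he
    have hst : IsStrictlyPositive (algebraMap ℝ A e) := by
      refine ⟨?_, ?_⟩
      · exact algebraMap_nonneg A he.le
      · exact (IsUnit.mk0 e he.ne').map (algebraMap ℝ A)
    have h1 : IsStrictlyPositive (A' e) := hst.nonneg_add ha
    have h2 : IsStrictlyPositive (B' e) := hst.nonneg_add hb
    apply trAux_core f htr _ _ _ h1 h2 (IsSelfAdjoint.of_nonneg (CFC.sqrt_nonneg _)).star_eq
    unfold CStarAbs
    rw [CFC.sqrt_mul_sqrt_self _ (CFC.sqrt_nonneg _)]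
    rw [CFC.sqrt_mul_sqrt_self _ (star_mul_self_nonneg _), star_mul,
      (IsSelfAdjoint.of_nonneg h1.nonneg).star_eq, (IsSelfAdjoint.of_nonneg h2.nonneg).star_eq]
    simp only [mul_assoc]
  have h0 := le_of_tendsto_of_tendsto (b := nhdsWithin (0 : ℝ) (Set.Ioi 0))
    (hL.continuousAt.tendsto.mono_left nhdsWithin_le_nhds)
    (hR.continuousAt.tendsto.mono_left nhdsWithin_le_nhds)
    (by filter_upwards [self_mem_nhdsWithin] with e he using key e he)
  simpa [A', B'] using h0

/-- **Tracial arithmetic–geometric mean inequality in a C*-algebra.** -/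
theorem tracial_am_gm {A : Type*} [CStarAlgebra A] [PartialOrder A] [StarOrderedRing A]
    (τ : A →ₗ[ℂ] ℂ) (hτ1 : τ 1 = 1)
    (hτpos : ∀ a : A, 0 ≤ a → 0 ≤ τ a)
    (hτtr : ∀ x y : A, τ (x * y) = τ (y * x))
    (a b : A) (ha : 0 ≤ a) (hb : 0 ≤ b) :
    τ (CStarAbs (a * b) ^ ((1 : ℝ) / 2)) ≤ (τ a * τ b) ^ ((1 : ℂ) / 2) ∧
      (τ a * τ b) ^ ((1 : ℂ) / 2) ≤ (1 / 2 : ℂ) * (τ a + τ b) := by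
  have hl := trAux_lim (PositiveLinearMap.mk₀ τ hτpos) hτtr a b ha hb
  change ‖τ (CFC.sqrt (CStarAbs (a * b)))‖ ^ 2 ≤ (τ a).re * (τ b).re at hl
  have hs : CStarAbs (a * b) ^ ((1 : ℝ) / 2) = CFC.sqrt (CStarAbs (a * b)) :=
    CFC.sqrt_eq_rpow.symm
  rw [hs]
  have hk := hτpos _ (CFC.sqrt_nonneg (CStarAbs (a * b)))
  have hx := hτpos a ha
  have hy := hτpos b hb
  generalize τ (CFC.sqrt (CStarAbs (a * b))) = z at *
  generalize τ a = x at *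
  generalize τ b = y at *
  lift z to ℝ using (Complex.nonneg_iff.mp hk).2.symm
  lift x to ℝ using (Complex.nonneg_iff.mp hx).2.symm
  lift y to ℝ using (Complex.nonneg_iff.mp hy).2.symm
  have hk' : 0 ≤ z := by exact_mod_cast hk
  have hx' : 0 ≤ x := by exact_mod_cast hx
  have hy' : 0 ≤ y := by exact_mod_cast hy
  have e : ((x : ℂ) * y) ^ ((1 : ℂ) / 2) = ((√(x * y) : ℝ) : ℂ) := by
    rw [Real.sqrt_eq_rpow, Complex.ofReal_cpow (mul_nonneg hx' hy')]
    push_cast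
    rfl
  rw [e]
  simp only [Complex.norm_real, Complex.ofReal_re, Real.norm_eq_abs, sq_abs] at hl
  constructor
  · exact_mod_cast Real.le_sqrt_of_sq_le hl
  · have : √(x * y) ≤ (1 / 2) * (x + y) := by
      rw [Real.sqrt_le_left (by positivity)]
      nlinarith [sq_nonneg (x - y)]
    have h2 : ((√(x * y) : ℝ) : ℂ) ≤ (((1 / 2) * (x + y) : ℝ) : ℂ) := by exact_mod_cast this
    push_cast at h2
    exact h2
end

section
/- Let A be a unital C*-algebra carrying a tracial state τ, and let p, q be positive real numbers with 1/p + 1/q = 1. Then for all x, y ∈ A and every choice of x† ∈ {x, x*, |x|, |x*|} and y† ∈ {y, y*, |y|, |y*|}, one has τ(|x† y†|) ≤ p⁻¹ τ(|x|ᵖ) + q⁻¹ τ(|y|^q). -/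
open scoped ComplexOrder

section TracialYoungAux

lemma tya_mid (H : ℝ → ℝ) (M : ℝ) (hM : ∀ θ ∈ Set.Icc (0:ℝ) 1, H θ ≤ M)
    (h0 : H 0 ≤ 0) (h1 : H 1 ≤ 0)
    (hmid : ∀ s ∈ Set.Icc (0:ℝ) 1, ∀ t ∈ Set.Icc (0:ℝ) 1, H ((s + t) / 2) ≤ (H s + H t) / 2) :
    ∀ θ ∈ Set.Icc (0:ℝ) 1, H θ ≤ 0 := by
  have key : ∀ n : ℕ, ∀ θ ∈ Set.Icc (0:ℝ) 1, H θ ≤ |M| * (1 / 2) ^ n := by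
    intro n
    induction n with
    | zero => intro θ hθ; simpa using (hM θ hθ).trans (le_abs_self M)
    | succ n ih =>
      intro θ hθ
      rw [pow_succ]
      rcases le_total θ (1/2) with h | h
      · have hm : 2 * θ ∈ Set.Icc (0:ℝ) 1 := ⟨by linarith [hθ.1], by linarith⟩
        have := hmid 0 (by simp) (2 * θ) hm
        rw [show (0 + 2 * θ) / 2 = θ by ring] at this
        linarith [ih _ hm]
      · have hm : 2 * θ - 1 ∈ Set.Icc (0:ℝ) 1 := ⟨by linarith, by linarith [hθ.2]⟩
        have := hmid 1 (by simp) (2 * θ - 1) hm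
        rw [show (1 + (2 * θ - 1)) / 2 = θ by ring] at this
        linarith [ih _ hm]
  intro θ hθ
  have hlim : Filter.Tendsto (fun n : ℕ => |M| * (1 / 2 : ℝ) ^ n) Filter.atTop (nhds (|M| * 0)) :=
    (tendsto_pow_atTop_nhds_zero_of_lt_one (by norm_num) (by norm_num)).const_mul _
  rw [mul_zero] at hlim
  exact ge_of_tendsto' hlim (fun n => key n θ hθ)

variable {A : Type*} [CStarAlgebra A] [PartialOrder A] [StarOrderedRing A]

lemma tya_bdd (τ : A →ₗ[ℂ] ℂ) (hτpos : ∀ a : A, 0 ≤ a → 0 ≤ τ a) :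
    ∃ C : ℝ, 0 ≤ C ∧ ∀ a, ‖τ a‖ ≤ C * ‖a‖ := by
  obtain ⟨C, hC⟩ := (PositiveLinearMap.mk₀ τ hτpos).exists_norm_apply_le
  exact ⟨C, C.2, hC⟩

lemma tya_star (τ : A →ₗ[ℂ] ℂ) (hτpos : ∀ a : A, 0 ≤ a → 0 ≤ τ a) (a : A) :
    τ (star a) = star (τ a) :=
  map_star (PositiveLinearMap.mk₀ τ hτpos) a

lemma tya_amgm (τ : A →ₗ[ℂ] ℂ) (hτpos : ∀ a : A, 0 ≤ a → 0 ≤ τ a) (u v : A) :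
    (τ (u * v)).re ≤ ((τ (u * star u)).re + (τ (star v * v)).re) / 2 := by
  have h := hτpos _ (star_mul_self_nonneg (star u - v))
  have e : star (star u - v) * (star u - v)
      = u * star u - u * v - star (u * v) + star v * v := by
    simp only [star_sub, star_star, star_mul]; noncomm_ring
  rw [e, map_add, map_sub, map_sub, tya_star τ hτpos] at h
  have h2 := (Complex.le_def.1 h).1
  simp at h2
  linarith

lemma tya_mono (τ : A →ₗ[ℂ] ℂ) (hτpos : ∀ a : A, 0 ≤ a → 0 ≤ τ a) {a b : A} (h : a ≤ b) :
    (τ a).re ≤ (τ b).re := by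
  have h := (Complex.le_def.1 (hτpos _ (sub_nonneg.2 h))).1
  simp at h
  linarith

lemma tya_rpow_add {a : A} {s t : ℝ} (hs : 0 ≤ s) (ht : 0 ≤ t) :
    a ^ (s + t) = a ^ s * a ^ t := by
  simp only [CFC.rpow_def]
  rw [← cfc_mul _ _ a (by fun_prop (disch := assumption)) (by fun_prop (disch := assumption))]
  congr 1
  ext1 z
  exact NNReal.rpow_add_of_nonneg z hs ht

lemma tya_rpow_norm {a : A} (ha : 0 ≤ a) {s p : ℝ} (hs : 0 ≤ s) (hsp : s ≤ p) :
    ‖a ^ s‖ ≤ (1 + ‖a‖) ^ p := by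
  rw [CFC.rpow_eq_cfc_real ha]
  refine norm_cfc_le (by positivity) fun x hx => ?_
  have h1 : ‖x‖ ≤ ‖a‖ * ‖(1:A)‖ := spectrum.norm_le_norm_mul_of_mem hx
  have h2 : ‖(1:A)‖ ≤ 1 := by
    rcases subsingleton_or_nontrivial A with h | h
    · simp [Subsingleton.elim (1:A) 0]
    · simp
  have h3 : ‖x‖ ≤ ‖a‖ := h1.trans (mul_le_of_le_one_right (norm_nonneg _) h2)
  have hx0 : 0 ≤ x := spectrum_nonneg_of_nonneg ha hx
  rw [Real.norm_of_nonneg hx0] at h3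
  rw [Real.norm_of_nonneg (Real.rpow_nonneg hx0 _)]
  calc x ^ s ≤ (1 + ‖a‖) ^ s := Real.rpow_le_rpow hx0 (by linarith) hs
    _ ≤ _ := Real.rpow_le_rpow_of_exponent_le (by linarith [norm_nonneg a]) hsp

lemma tya_sa (a : A) (s : ℝ) : star (a ^ s) = a ^ s :=
  (IsSelfAdjoint.of_nonneg (CFC.rpow_nonneg (a := a) (y := s))).star_eq

lemma tya_contr_left {w : A} (hw : ‖w‖ ≤ 1) : star w * w ≤ 1 := by
  rw [← CStarAlgebra.norm_le_one_iff_of_nonneg _ (star_mul_self_nonneg w),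
    CStarRing.norm_star_mul_self]
  nlinarith [norm_nonneg w]

lemma tya_contr_bound (τ : A →ₗ[ℂ] ℂ) (hτpos : ∀ a : A, 0 ≤ a → 0 ≤ τ a)
    (hτtr : ∀ x y : A, τ (x * y) = τ (y * x))
    {w : A} (hw : ‖w‖ ≤ 1) (a : A) {s : ℝ} (hs : 0 ≤ s) :
    (τ (star w * w * a ^ s)).re ≤ (τ (a ^ s)).re := by
  have e : a ^ s = a ^ (s / 2) * a ^ (s / 2) := by
    rw [← tya_rpow_add (by positivity) (by positivity), add_halves]
  have h := star_left_conjugate_le_conjugate (tya_contr_left hw) (a ^ (s / 2))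
  rw [tya_sa, mul_one] at h
  have := tya_mono τ hτpos h
  rw [← e] at this
  rwa [mul_assoc, hτtr, mul_assoc, ← e] at this

lemma tya_bilin (τ : A →ₗ[ℂ] ℂ) (hτpos : ∀ a : A, 0 ≤ a → 0 ≤ τ a)
    (hτtr : ∀ x y : A, τ (x * y) = τ (y * x))
    {p q : ℝ} (hp : 0 < p) (hq : 0 < q) (hpq : 1 / p + 1 / q = 1)
    {w a b : A} (hw : ‖w‖ ≤ 1) (ha : 0 ≤ a) (hb : 0 ≤ b) :
    (τ (w * a * star w * b)).re ≤ p⁻¹ * (τ (a ^ p)).re + q⁻¹ * (τ (b ^ q)).re := by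
  set α := (τ (a ^ p)).re
  set β := (τ (b ^ q)).re
  obtain ⟨C, hC0, hC⟩ := tya_bdd τ hτpos
  let G : ℝ → ℝ := fun θ => (τ (w * a ^ (p * θ) * star w * b ^ (q * (1 - θ)))).re
  have key := tya_mid (fun θ => G θ - (θ * α + (1 - θ) * β))
    (C * ((1 + ‖a‖) ^ p * (1 + ‖b‖) ^ q) + (|α| + |β|)) ?_ ?_ ?_ ?_ p⁻¹ ?_
  · have hq' : 1 - p⁻¹ = q⁻¹ := by rw [← one_div, ← one_div]; linarith
    simp only [G, hq', mul_inv_cancel₀ hp.ne', mul_inv_cancel₀ hq.ne', CFC.rpow_one a ha,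
      CFC.rpow_one b hb] at key
    linarith
  · rintro θ ⟨h0, h1⟩
    have e1 : G θ ≤ C * ((1 + ‖a‖) ^ p * (1 + ‖b‖) ^ q) := by
      refine (Complex.re_le_norm _).trans ((hC _).trans ?_)
      gcongr
      refine (norm_mul_le _ _).trans ?_
      gcongr
      · refine (norm_mul_le _ _).trans ?_
        rw [norm_star]
        have h2 := tya_rpow_norm ha (s := p * θ) (p := p) (by positivity) (by nlinarith)
        calc ‖w * a ^ (p * θ)‖ * ‖w‖ ≤ (‖w‖ * ‖a ^ (p * θ)‖) * ‖w‖ := by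
              gcongr; exact norm_mul_le _ _
          _ ≤ (1 * (1 + ‖a‖) ^ p) * 1 := by gcongr
          _ = _ := by ring
      · exact tya_rpow_norm hb (mul_nonneg hq.le (by linarith)) (by nlinarith)
    have e2 : - (θ * α) ≤ |α| := by
      have := abs_mul θ α
      rw [abs_of_nonneg h0] at this
      nlinarith [neg_abs_le (θ * α), abs_nonneg α]
    have e3 : - ((1 - θ) * β) ≤ |β| := by
      have := abs_mul (1 - θ) β
      rw [abs_of_nonneg (by linarith : 0 ≤ 1 - θ)] at this
      nlinarith [neg_abs_le ((1 - θ) * β), abs_nonneg β]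
    show G θ - _ ≤ _
    linarith
  · have h := tya_contr_bound τ hτpos hτtr (w := star w) (by simpa using hw) b hq.le
    rw [star_star] at h
    simp only [G, mul_zero, CFC.rpow_zero a ha, mul_one, sub_zero, zero_mul, one_mul, zero_add]
    linarith
  · have h := tya_contr_bound τ hτpos hτtr hw a hp.le
    simp only [G, mul_zero, sub_self, CFC.rpow_zero b hb, mul_one, zero_mul, one_mul, add_zero]
    rw [hτtr, ← mul_assoc]
    linarith
  · rintro s ⟨hs0, hs1⟩ t ⟨ht0, ht1⟩
    have ea : a ^ (p * ((s + t) / 2)) = a ^ (p * s / 2) * a ^ (p * t / 2) := by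
      rw [← tya_rpow_add (by positivity) (by positivity)]; congr 1; ring
    have hs1' : 0 ≤ q * (1 - s) / 2 := by have : 0 ≤ 1 - s := by linarith
                                          positivity
    have ht1' : 0 ≤ q * (1 - t) / 2 := by have : 0 ≤ 1 - t := by linarith
                                          positivity
    have eb : b ^ (q * (1 - (s + t) / 2)) = b ^ (q * (1 - t) / 2) * b ^ (q * (1 - s) / 2) := by
      rw [← tya_rpow_add ht1' hs1']; congr 1; ring
    have sq (c : A) (r : ℝ) (hr : 0 ≤ r / 2) : c ^ (r / 2) * c ^ (r / 2) = c ^ r := by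
      rw [← tya_rpow_add hr hr, add_halves]
    have h := tya_amgm τ hτpos (b ^ (q * (1 - s) / 2) * w * a ^ (p * s / 2))
      (a ^ (p * t / 2) * star w * b ^ (q * (1 - t) / 2))
    have e1 : τ ((b ^ (q * (1 - s) / 2) * w * a ^ (p * s / 2)) *
        (a ^ (p * t / 2) * star w * b ^ (q * (1 - t) / 2))) =
        τ (w * a ^ (p * ((s + t) / 2)) * star w * b ^ (q * (1 - (s + t) / 2))) := by
      rw [ea, eb]
      simp only [mul_assoc]
      rw [hτtr]
      simp only [mul_assoc]
    have e2 : τ ((b ^ (q * (1 - s) / 2) * w * a ^ (p * s / 2)) *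
        star (b ^ (q * (1 - s) / 2) * w * a ^ (p * s / 2))) =
        τ (w * a ^ (p * s) * star w * b ^ (q * (1 - s))) := by
      rw [← sq a (p * s) (by positivity), ← sq b (q * (1 - s)) hs1']
      simp only [star_mul, tya_sa, mul_assoc]
      rw [hτtr]
      simp only [mul_assoc]
    have e3 : τ (star (a ^ (p * t / 2) * star w * b ^ (q * (1 - t) / 2)) *
        (a ^ (p * t / 2) * star w * b ^ (q * (1 - t) / 2))) =
        τ (w * a ^ (p * t) * star w * b ^ (q * (1 - t))) := by
      rw [← sq a (p * t) (by positivity), ← sq b (q * (1 - t)) ht1']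
      simp only [star_mul, star_star, tya_sa, mul_assoc]
      rw [hτtr]
      simp only [mul_assoc]
    rw [e1, e2, e3] at h
    simp only [G]
    linarith
  · have : 0 < 1 / q := by positivity
    constructor
    · positivity
    · rw [← one_div]; linarith

lemma tya_holder (τ : A →ₗ[ℂ] ℂ) (hτpos : ∀ a : A, 0 ≤ a → 0 ≤ τ a)
    (hτtr : ∀ x y : A, τ (x * y) = τ (y * x))
    {p q : ℝ} (hp : 0 < p) (hq : 0 < q) (hpq : 1 / p + 1 / q = 1)
    {w a b : A} (hw : ‖w‖ ≤ 1) (ha : 0 ≤ a) (hb : 0 ≤ b) :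
    (τ (w * (a * b))).re ≤ p⁻¹ * (τ (a ^ p)).re + q⁻¹ * (τ (b ^ q)).re := by
  have h1 := tya_bilin τ hτpos hτtr hp hq hpq hw ha hb
  have h2 := tya_bilin τ hτpos hτtr hp hq hpq (w := star (1 : A) * 1) (by
    rcases subsingleton_or_nontrivial A with h | h
    · simp [Subsingleton.elim (1:A) 0]
    · simp) ha hb
  simp only [star_one, mul_one, one_mul] at h2
  obtain ⟨c, hc, rfl⟩ := CStarAlgebra.nonneg_iff_exists_nonneg_and_eq_mul_self.1 ha
  obtain ⟨d, hd, rfl⟩ := CStarAlgebra.nonneg_iff_exists_nonneg_and_eq_mul_self.1 hb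
  have hc' : star c = c := (IsSelfAdjoint.of_nonneg hc).star_eq
  have hd' : star d = d := (IsSelfAdjoint.of_nonneg hd).star_eq
  have h := tya_amgm τ hτpos (d * w * c) (c * d)
  have e1 : τ ((d * w * c) * (c * d)) = τ (w * (c * c * (d * d))) := by
    simp only [mul_assoc]
    rw [hτtr]
    simp only [mul_assoc]
  have e2 : τ ((d * w * c) * star (d * w * c)) = τ (w * (c * c) * star w * (d * d)) := by
    simp only [star_mul, hc', hd', mul_assoc]
    rw [hτtr]
    simp only [mul_assoc]
  have e3 : τ (star (c * d) * (c * d)) = τ (c * c * (d * d)) := by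
    simp only [star_mul, hc', hd', mul_assoc]
    rw [hτtr]
    simp only [mul_assoc]
  rw [e1, e2, e3] at h
  linarith

lemma tya_abs_nonneg (z : A) : 0 ≤ CStarAbs z := CFC.sqrt_nonneg _

lemma tya_abs_sq (z : A) : CStarAbs z * CStarAbs z = star z * z :=
  CFC.sqrt_mul_sqrt_self _ (star_mul_self_nonneg z)

lemma tya_polar (τ : A →ₗ[ℂ] ℂ) (hτ1 : τ 1 = 1)
    (hτpos : ∀ a : A, 0 ≤ a → 0 ≤ τ a) (z : A) {ε : ℝ} (hε : 0 < ε) :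
    ∃ w : A, ‖w‖ ≤ 1 ∧ (τ (CStarAbs z)).re ≤ (τ (w * z)).re + ε := by
  set h := CStarAbs z with hh
  have h0 : 0 ≤ h := tya_abs_nonneg z
  have hsa : IsSelfAdjoint h := .of_nonneg h0
  have hspec : ∀ x ∈ spectrum ℝ h, 0 ≤ x := fun x hx => spectrum_nonneg_of_nonneg h0 hx
  have hcont : ContinuousOn (fun t : ℝ => (t + ε)⁻¹) (spectrum ℝ h) := by
    refine ContinuousOn.inv₀ (by fun_prop) fun x hx => ?_
    have := hspec x hx
    positivity
  let k : A := cfc (fun t : ℝ => (t + ε)⁻¹) h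
  have hk : star k = k := (cfc_predicate (R := ℝ) (fun t : ℝ => (t + ε)⁻¹) h : IsSelfAdjoint _).star_eq
  have hid : cfc (fun t : ℝ => t) h = h := cfc_id' ℝ h
  have hkhh : cfc (fun t : ℝ => (t + ε)⁻¹ * (t * t)) h = k * (h * h) := by
    rw [cfc_mul _ _ h hcont (by fun_prop), cfc_mul _ _ h (by fun_prop) (by fun_prop), hid]
  refine ⟨k * star z, ?_, ?_⟩
  · have e : (k * star z) * star (k * star z) = cfc (fun t : ℝ => (t + ε)⁻¹ * (t * t) * (t + ε)⁻¹) h := by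
      rw [cfc_mul _ _ h (by fun_prop) hcont, hkhh, star_mul, star_star, hk, hh, tya_abs_sq]
      simp only [mul_assoc]
      rfl
    have : ‖(k * star z) * star (k * star z)‖ ≤ 1 := by
      rw [e]
      refine norm_cfc_le zero_le_one fun x hx => ?_
      have hx0 := hspec x hx
      rw [Real.norm_of_nonneg (by positivity)]
      rw [show (x + ε)⁻¹ * (x * x) * (x + ε)⁻¹ = (x * x) / ((x + ε) * (x + ε)) by field_simp]
      rw [div_le_one (by positivity)]
      nlinarith
    rw [CStarRing.norm_self_mul_star] at this
    nlinarith [norm_nonneg (k * star z)]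
  · have hle : h ≤ k * (h * h) + algebraMap ℝ A ε := by
      rw [← hkhh, ← cfc_const ε h, ← cfc_add h _ _ (by fun_prop) (by fun_prop)]
      conv_lhs => rw [← hid]
      refine cfc_mono (fun x hx => ?_) (by fun_prop) (by fun_prop)
      have hx0 := hspec x hx
      rw [inv_mul_eq_div, ← sub_le_iff_le_add, le_div_iff₀ (by positivity)]
      nlinarith [sq_nonneg ε]
    have := tya_mono τ hτpos hle
    rw [map_add, Algebra.algebraMap_eq_smul_one, ← Complex.coe_smul, map_smul, hτ1, hh,
      tya_abs_sq] at this
    simpa [mul_assoc] using this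

lemma tya_cfc_tr (τ : A →ₗ[ℂ] ℂ) (hτpos : ∀ a : A, 0 ≤ a → 0 ≤ τ a)
    (hτtr : ∀ x y : A, τ (x * y) = τ (y * x)) (x : A) (f : ℝ → ℝ) (hf : Continuous f) :
    τ (cfc f (star x * x)) = τ (cfc f (x * star x)) := by
  obtain ⟨C, hC0, hC⟩ := tya_bdd τ hτpos
  have hpow : ∀ n : ℕ, τ ((star x * x) ^ n) = τ ((x * star x) ^ n) := by
    intro n
    cases n with
    | zero => simp
    | succ n =>
      have : ∀ m : ℕ, x * (star x * x) ^ m = (x * star x) ^ m * x := by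
        intro m
        induction m with
        | zero => simp
        | succ m ih => rw [pow_succ, ← mul_assoc, ih, pow_succ]; simp only [mul_assoc]
      rw [pow_succ, ← mul_assoc, hτtr, ← mul_assoc, this, mul_assoc, ← pow_succ]
  have hpoly : ∀ P : Polynomial ℝ, τ (P.aeval (star x * x)) = τ (P.aeval (x * star x)) := by
    intro P
    simp only [Polynomial.aeval_eq_sum_range, map_sum, ← Complex.coe_smul, map_smul, hpow]
  have h1 : IsSelfAdjoint (star x * x) := .star_mul_self x
  have h2 : IsSelfAdjoint (x * star x) := .mul_star_self x
  obtain ⟨R, hR⟩ : ∃ R : ℝ, ∀ t, t ∈ spectrum ℝ (star x * x) ∨ t ∈ spectrum ℝ (x * star x) →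
      t ∈ Set.Icc (-R) R := by
    refine ⟨max (‖star x * x‖ * ‖(1:A)‖) (‖x * star x‖ * ‖(1:A)‖), fun t ht => ?_⟩
    rw [Set.mem_Icc, ← abs_le, ← Real.norm_eq_abs]
    rcases ht with ht | ht
    · exact (spectrum.norm_le_norm_mul_of_mem ht).trans (le_max_left _ _)
    · exact (spectrum.norm_le_norm_mul_of_mem ht).trans (le_max_right _ _)
  rw [← sub_eq_zero, ← norm_le_zero_iff]
  refine le_of_forall_pos_le_add fun ε hε => ?_
  set δ := ε / (2 * (C + 1)) with hδ
  have hδ0 : 0 < δ := by positivity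
  obtain ⟨P, hP⟩ := exists_polynomial_near_of_continuousOn (-R) R f hf.continuousOn δ hδ0
  have near : ∀ a : A, IsSelfAdjoint a → (∀ t ∈ spectrum ℝ a, t ∈ Set.Icc (-R) R) →
      ‖τ (cfc f a) - τ (P.aeval a)‖ ≤ C * δ := by
    intro a ha hs
    rw [← map_sub, ← cfc_polynomial P a ha, ← cfc_sub f _ a (by fun_prop) (by fun_prop)]
    refine (hC _).trans ?_
    gcongr
    refine norm_cfc_le hδ0.le fun t ht => ?_
    rw [Real.norm_eq_abs, abs_sub_comm]
    exact (hP t (hs t ht)).le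
  have n1 := near _ h1 (fun t ht => hR t (Or.inl ht))
  have n2 := near _ h2 (fun t ht => hR t (Or.inr ht))
  rw [← hpoly] at n2
  have e : τ (cfc f (star x * x)) - τ (cfc f (x * star x)) =
    (τ (cfc f (star x * x)) - τ (P.aeval (star x * x))) -
    (τ (cfc f (x * star x)) - τ (P.aeval (star x * x))) := by ring
  rw [e]
  refine (norm_sub_le _ _).trans ?_
  have : 2 * ((C + 1) * δ) = ε := by rw [hδ]; field_simp
  nlinarith

lemma tya_abs_rpow (z : A) {p : ℝ} (hp : 0 < p) :
    CStarAbs z ^ p = cfc (fun t : ℝ => |t| ^ (p / 2)) (star z * z) := by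
  have h0 := star_mul_self_nonneg z
  rw [CStarAbs, CFC.sqrt_eq_rpow, CFC.rpow_rpow_of_exponent_nonneg _ _ _ (by norm_num) hp.le h0,
    CFC.rpow_eq_cfc_real h0]
  refine cfc_congr fun t ht => ?_
  have : 0 ≤ t := spectrum_nonneg_of_nonneg h0 ht
  simp only [abs_of_nonneg this]
  congr 1; ring

lemma tya_abs_star (τ : A →ₗ[ℂ] ℂ) (hτpos : ∀ a : A, 0 ≤ a → 0 ≤ τ a)
    (hτtr : ∀ x y : A, τ (x * y) = τ (y * x)) (z : A) {p : ℝ} (hp : 0 < p) :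
    τ (CStarAbs (star z) ^ p) = τ (CStarAbs z ^ p) := by
  rw [tya_abs_rpow _ hp, tya_abs_rpow _ hp, star_star]
  refine (tya_cfc_tr τ hτpos hτtr z _ ?_).symm
  exact continuous_abs.rpow_const (fun x => Or.inr (by positivity))

lemma tya_abs_star_one (τ : A →ₗ[ℂ] ℂ) (hτpos : ∀ a : A, 0 ≤ a → 0 ≤ τ a)
    (hτtr : ∀ x y : A, τ (x * y) = τ (y * x)) (z : A) :
    τ (CStarAbs (star z)) = τ (CStarAbs z) := by
  have := tya_abs_star τ hτpos hτtr z one_pos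
  rwa [CFC.rpow_one _ (tya_abs_nonneg _), CFC.rpow_one _ (tya_abs_nonneg _)] at this

lemma tya_abs_abs (z : A) : CStarAbs (CStarAbs z) = CStarAbs z := by
  conv_lhs => rw [CStarAbs, (IsSelfAdjoint.of_nonneg (tya_abs_nonneg z)).star_eq]
  exact CFC.sqrt_mul_self _ (tya_abs_nonneg z)

lemma tya_abs_left (x y : A) : CStarAbs (x * y) = CStarAbs (CStarAbs x * y) := by
  have e : star (CStarAbs x * y) * (CStarAbs x * y) = star (x * y) * (x * y) := by
    rw [star_mul, star_mul, (IsSelfAdjoint.of_nonneg (tya_abs_nonneg x)).star_eq]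
    calc _ = star y * (CStarAbs x * CStarAbs x) * y := by simp only [mul_assoc]
      _ = _ := by rw [tya_abs_sq]; simp only [mul_assoc]
  rw [CStarAbs, CStarAbs, e]

lemma tya_main (τ : A →ₗ[ℂ] ℂ) (hτ1 : τ 1 = 1) (hτpos : ∀ a : A, 0 ≤ a → 0 ≤ τ a)
    (hτtr : ∀ x y : A, τ (x * y) = τ (y * x))
    {p q : ℝ} (hp : 0 < p) (hq : 0 < q) (hpq : 1 / p + 1 / q = 1) (x y : A) :
    (τ (CStarAbs (x * y))).re ≤ p⁻¹ * (τ (CStarAbs x ^ p)).re + q⁻¹ * (τ (CStarAbs y ^ q)).re := by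
  have e : τ (CStarAbs (x * y)) = τ (CStarAbs (CStarAbs (star y) * CStarAbs x)) := by
    rw [tya_abs_left, ← tya_abs_star_one τ hτpos hτtr, star_mul,
      (IsSelfAdjoint.of_nonneg (tya_abs_nonneg x)).star_eq, tya_abs_left]
  rw [e, ← tya_abs_star τ hτpos hτtr y hq]
  refine le_of_forall_pos_le_add fun ε hε => ?_
  obtain ⟨w, hw, h⟩ := tya_polar τ hτ1 hτpos (CStarAbs (star y) * CStarAbs x) hε
  have := tya_holder τ hτpos hτtr hq hp (by linarith) hw (tya_abs_nonneg (star y))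
    (tya_abs_nonneg x)
  linarith

lemma tya_variant (τ : A →ₗ[ℂ] ℂ) (hτpos : ∀ a : A, 0 ≤ a → 0 ≤ τ a)
    (hτtr : ∀ x y : A, τ (x * y) = τ (y * x)) {p : ℝ} (hp : 0 < p) (x x' : A)
    (hx' : x' = x ∨ x' = star x ∨ x' = CStarAbs x ∨ x' = CStarAbs (star x)) :
    τ (CStarAbs x' ^ p) = τ (CStarAbs x ^ p) := by
  rcases hx' with rfl | rfl | rfl | rfl
  · rfl
  · exact tya_abs_star τ hτpos hτtr x hp
  · rw [tya_abs_abs]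
  · rw [tya_abs_abs]
    exact tya_abs_star τ hτpos hτtr x hp

end TracialYoungAux

/-- **A tracial Young inequality for all the variants `x† ∈ {x, x*, |x|, |x*|}`.** -/
theorem tracial_young_inequality_variants {A : Type*} [CStarAlgebra A] [PartialOrder A]
    [StarOrderedRing A]
    (τ : A →ₗ[ℂ] ℂ) (hτ1 : τ 1 = 1)
    (hτpos : ∀ a : A, 0 ≤ a → 0 ≤ τ a)
    (hτtr : ∀ x y : A, τ (x * y) = τ (y * x))
    (p q : ℝ) (hp : 0 < p) (hq : 0 < q) (hpq : 1 / p + 1 / q = 1)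
    (x y x' y' : A)
    (hx' : x' = x ∨ x' = star x ∨ x' = CStarAbs x ∨ x' = CStarAbs (star x))
    (hy' : y' = y ∨ y' = star y ∨ y' = CStarAbs y ∨ y' = CStarAbs (star y)) :
    τ (CStarAbs (x' * y')) ≤ (p⁻¹ : ℂ) * τ (CStarAbs x ^ p) + (q⁻¹ : ℂ) * τ (CStarAbs y ^ q) := by
  have h := tya_main τ hτ1 hτpos hτtr hp hq hpq x' y'
  rw [tya_variant τ hτpos hτtr hp x x' hx', tya_variant τ hτpos hτtr hq y y' hy'] at h
  have i0 := (Complex.le_def.1 (hτpos _ (tya_abs_nonneg (x' * y')))).2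
  have i1 := (Complex.le_def.1 (hτpos _ (CFC.rpow_nonneg (a := CStarAbs x) (y := p)))).2
  have i2 := (Complex.le_def.1 (hτpos _ (CFC.rpow_nonneg (a := CStarAbs y) (y := q)))).2
  rw [Complex.zero_im] at i0 i1 i2
  rw [← Complex.ofReal_inv, ← Complex.ofReal_inv, Complex.le_def]
  constructor
  · simpa only [Complex.add_re, Complex.re_ofReal_mul] using h
  · rw [Complex.add_im, Complex.im_ofReal_mul, Complex.im_ofReal_mul, ← i0, ← i1, ← i2]
    simp
end

section
/- Let A be a unital C*-algebra carrying a tracial state τ, and let F, G : ℝ → ℝ be continuous functions satisfying the pointwise Fenchel–Young inequality s·t ≤ F(t) + G(s) for all s, t ≥ 0 (for instance, F convex on [0,∞) and G its Fenchel conjugate). Then for all positive elements a, b ∈ A, τ(|ab|) ≤ τ(F(a)) + τ(G(b)), where F(a) and G(b) are defined by the continuous functional calculus. -/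
open scoped ComplexOrder

lemma approx_aux (G : ℝ → ℝ) (hG : Continuous G) (M ε : ℝ) (hM : 0 < M) (hε : 0 < ε) :
    ∃ (n : ℕ) (s : Fin n → ℝ) (ψ : Fin n → ℝ → ℝ), (∀ k, 0 ≤ s k) ∧ (∀ k, Continuous (ψ k)) ∧
      ∀ x ∈ Set.Icc 0 M, (∀ k, 0 ≤ ψ k x) ∧ ∑ k, ψ k x = 1 ∧
        x - ε ≤ ∑ k, s k * ψ k x ∧ (∑ k, s k * ψ k x) ≤ x + ε ∧ ∑ k, G (s k) * ψ k x ≤ G x + ε := by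
  let f : C(unitInterval, ℝ) := ⟨fun x => M * x, by fun_prop⟩
  let g : C(unitInterval, ℝ) := ⟨fun x => G (M * x), by fun_prop⟩
  have h1 := (Metric.tendsto_nhds.1 (bernsteinApproximation_uniform f)) ε hε
  have h2 := (Metric.tendsto_nhds.1 (bernsteinApproximation_uniform g)) ε hε
  obtain ⟨n, h1, h2⟩ := (h1.and h2).exists
  refine ⟨n + 1, fun k => M * bernstein.z k,
    fun k x => bernstein n k (Set.projIcc 0 1 zero_le_one (x / M)), ?_, ?_, ?_⟩
  · intro k
    exact mul_nonneg hM.le (bernstein.z k).2.1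
  · intro k
    exact (bernstein n k).continuous.comp (continuous_projIcc.comp (by fun_prop))
  · intro x hx
    have hx1 : x / M ∈ Set.Icc (0:ℝ) 1 := ⟨div_nonneg hx.1 hM.le, (div_le_one hM).2 hx.2⟩
    beta_reduce
    rw [Set.projIcc_of_mem _ hx1]
    set y : unitInterval := ⟨x / M, hx1⟩
    have hy : M * (y : ℝ) = x := by simp only [y]; field_simp
    have e1 := (ContinuousMap.dist_apply_le_dist y).trans h1.le
    have e2 := (ContinuousMap.dist_apply_le_dist y).trans h2.le
    rw [Real.dist_eq, abs_le, bernsteinApproximation.apply] at e1 e2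
    simp only [f, g, ContinuousMap.coe_mk, hy, smul_eq_mul, mul_comm (bernstein _ _ _)] at e1 e2
    refine ⟨fun k => bernstein_nonneg, bernstein.probability n y, ?_, ?_, ?_⟩ <;> linarith

section
variable {A : Type*} [CStarAlgebra A] [PartialOrder A] [StarOrderedRing A]

lemma tr_mul_nonneg (T : A →ₗ[ℝ] ℝ) (hpos : ∀ a : A, 0 ≤ a → 0 ≤ T a)
    (htr : ∀ x y : A, T (x * y) = T (y * x)) (a b : A) (ha : 0 ≤ a) (hb : 0 ≤ b) :
    0 ≤ T (a * b) := by
  have h : T (a * b) = T (star (CFC.sqrt a) * b * CFC.sqrt a) := by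
    rw [htr _ (CFC.sqrt a), (CFC.sqrt_nonneg a).isSelfAdjoint.star_eq, ← mul_assoc,
      CFC.sqrt_mul_sqrt_self a ha]
  rw [h]
  exact hpos _ (star_left_conjugate_nonneg hb _)

lemma tr_mul_le (T : A →ₗ[ℝ] ℝ) (h1 : T 1 = 1) (hpos : ∀ a : A, 0 ≤ a → 0 ≤ T a)
    (htr : ∀ x y : A, T (x * y) = T (y * x))
    (F G : ℝ → ℝ) (hF : Continuous F) (hG : Continuous G)
    (hFG : ∀ s t : ℝ, 0 ≤ s → 0 ≤ t → s * t ≤ F t + G s)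
    (a b : A) (ha : 0 ≤ a) (hb : 0 ≤ b) :
    T (a * b) ≤ T (cfc F a) + T (cfc G b) := by
  have mono : ∀ x y : A, x ≤ y → T x ≤ T y := fun x y h => by
    have := hpos _ (sub_nonneg.2 h)
    rw [map_sub] at this; linarith
  suffices H : ∀ ε > 0, T (a * b) ≤ T (cfc F a) + T (cfc G b) + ε * (T a + 1) by
    have hTa := hpos a ha
    refine le_of_forall_pos_le_add fun ε hε => ?_
    have := H (ε / (T a + 1)) (by positivity)
    rwa [div_mul_cancel₀ _ (by positivity)] at this
  intro ε hε
  obtain ⟨n, s, ψ, hs, hc, hψ⟩ := approx_aux G hG (‖b‖ + 1) ε (by positivity) hε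
  have hsp : ∀ x ∈ spectrum ℝ b, x ∈ Set.Icc 0 (‖b‖ + 1) := fun x hx => by
    have h2 := spectrum_nonneg_of_nonneg hb hx
    have : Nontrivial A := by
      by_contra h
      rw [not_nontrivial_iff_subsingleton] at h
      simp [spectrum.of_subsingleton] at hx
    have h3 := spectrum.norm_le_norm_of_mem hx
    rw [Real.norm_eq_abs, abs_of_nonneg h2] at h3
    exact ⟨h2, by linarith⟩
  have hbs : IsSelfAdjoint b := hb.isSelfAdjoint
  have has : IsSelfAdjoint a := ha.isSelfAdjoint
  have hco : ∀ k, ContinuousOn (ψ k) (spectrum ℝ b) := fun k => (hc k).continuousOn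
  set P : Fin n → A := fun k => cfc (ψ k) b with hP
  have hP0 : ∀ k, 0 ≤ P k := fun k => cfc_nonneg fun x hx => (hψ x (hsp x hx)).1 k
  have hlin : ∀ c : Fin n → ℝ, cfc (fun x => ∑ k, c k * ψ k x) b = ∑ k, c k • P k := by
    intro c
    have he : (fun x => ∑ k, c k * ψ k x) = ∑ k, fun x => c k * ψ k x := by
      ext x; simp
    rw [he, cfc_sum_univ (fun k x => c k * ψ k x) b (fun k => by have := hc k; fun_prop)]
    exact Finset.sum_congr rfl fun k _ => cfc_const_mul (c k) (ψ k) b (hco k)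
  have hP1 : ∑ k, P k = 1 := by
    have := hlin 1
    simp only [Pi.one_apply, one_mul, one_smul] at this
    rw [← this, ← cfc_one ℝ b]
    exact cfc_congr fun x hx => (hψ x (hsp x hx)).2.1
  have hbP : b ≤ ∑ k, s k • P k + algebraMap ℝ A ε := by
    have : cfc (fun x : ℝ => x) b ≤ cfc (fun x => ∑ k, s k * ψ k x + ε) b :=
      cfc_mono (fun x hx => by have := (hψ x (hsp x hx)).2.2.1; linarith)
        (by fun_prop) (by fun_prop)
    rwa [cfc_id' ℝ b, cfc_add_const ε _ b (by fun_prop), hlin] at this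
  have hGP : ∑ k, G (s k) • P k ≤ cfc G b + algebraMap ℝ A ε := by
    have : cfc (fun x => ∑ k, G (s k) * ψ k x) b ≤ cfc (fun x => G x + ε) b :=
      cfc_mono (fun x hx => (hψ x (hsp x hx)).2.2.2.2)
        (by fun_prop) (by fun_prop)
    rwa [cfc_add_const ε G b (by fun_prop), hlin] at this
  have hk : ∀ k, s k * T (a * P k) ≤ T (cfc F a * P k) + G (s k) * T (P k) := by
    intro k
    have h : s k • a ≤ cfc F a + algebraMap ℝ A (G (s k)) := by
      have : cfc (fun x : ℝ => s k * x) a ≤ cfc (fun x => F x + G (s k)) a :=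
        cfc_mono (fun x hx => hFG _ _ (hs k) (spectrum_nonneg_of_nonneg ha hx))
          (by fun_prop) (by fun_prop)
      rwa [cfc_add_const _ F a (by fun_prop), cfc_const_mul_id (s k) a] at this
    have := tr_mul_nonneg T hpos htr _ _ (sub_nonneg.2 h) (hP0 k)
    rw [sub_mul, add_mul, map_sub, map_add, smul_mul_assoc, map_smul, Algebra.algebraMap_eq_smul_one,
      smul_mul_assoc, map_smul, one_mul] at this
    simp only [smul_eq_mul] at this
    linarith
  have e1 : T (a * b) ≤ ∑ k, s k * T (a * P k) + ε * T a := by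
    have := tr_mul_nonneg T hpos htr _ _ ha (sub_nonneg.2 hbP)
    rw [mul_sub, map_sub, mul_add, map_add, Finset.mul_sum, map_sum,
      Algebra.algebraMap_eq_smul_one] at this
    simp only [mul_smul_comm, map_smul, smul_eq_mul, mul_one] at this
    linarith
  have e2 := mono _ _ hGP
  rw [map_sum, map_add, Algebra.algebraMap_eq_smul_one] at e2
  simp only [map_smul, smul_eq_mul, h1, mul_one] at e2
  have e3 : ∑ k, T (cfc F a * P k) = T (cfc F a) := by
    rw [← map_sum, ← Finset.mul_sum, hP1, mul_one]
  have e4 := Finset.sum_le_sum fun k (_ : k ∈ Finset.univ) => hk k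
  rw [Finset.sum_add_distrib, e3] at e4
  linarith

lemma tr_unitary_le (T : A →ₗ[ℝ] ℝ) (h1 : T 1 = 1) (hpos : ∀ a : A, 0 ≤ a → 0 ≤ T a)
    (htr : ∀ x y : A, T (x * y) = T (y * x)) (hst : ∀ x : A, T (star x) = T x)
    (F G : ℝ → ℝ) (hF : Continuous F) (hG : Continuous G)
    (hFG : ∀ s t : ℝ, 0 ≤ s → 0 ≤ t → s * t ≤ F t + G s)
    (a b : A) (ha : 0 ≤ a) (hb : 0 ≤ b) (u : A) (hu : u ∈ unitary A) :
    T (star u * (a * b)) ≤ T (cfc F a) + T (cfc G b) := by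
  have hq := tr_mul_le T h1 hpos htr F G hF hG hFG a b ha hb
  have hp := tr_mul_le T h1 hpos htr F G hF hG hFG (star u * a * u) b
    (star_left_conjugate_nonneg ha u) hb
  have has : IsSelfAdjoint a := ha.isSelfAdjoint
  have hcu : cfc F (star u * a * u) = star u * cfc F a * u := by
    have := StarAlgHomClass.map_cfc (Unitary.conjStarAlgAut ℝ A (star ⟨u, hu⟩)) F a
      (hF.continuousOn) (by
        change Continuous fun x : A => (star u : A) * x * star (star u)
        fun_prop) has (has.map _)
    simpa [Unitary.conjStarAlgAut_apply] using this.symm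
  have huu := Unitary.mul_star_self_of_mem hu
  rw [hcu, htr _ u, ← mul_assoc, huu, one_mul] at hp
  obtain ⟨c, hc, rfl⟩ : ∃ c, IsSelfAdjoint c ∧ c * c = a :=
    ⟨_, (CFC.sqrt_nonneg a).isSelfAdjoint, CFC.sqrt_mul_sqrt_self a ha⟩
  obtain ⟨d, hd, rfl⟩ : ∃ c, IsSelfAdjoint c ∧ c * c = b :=
    ⟨_, (CFC.sqrt_nonneg b).isSelfAdjoint, CFC.sqrt_mul_sqrt_self b hb⟩
  have hz := hpos _ (star_mul_self_nonneg (c * u * d - c * d))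
  have ex : star (c * u * d - c * d) * (c * u * d - c * d) =
      d * (star u * c * c * u * d) + d * (c * c * d) - d * (star u * c * c * d)
        - star (d * (star u * c * c * d)) := by
    simp only [star_sub, star_mul, star_star, hc.star_eq, hd.star_eq]
    noncomm_ring
  rw [ex, map_sub, map_sub, map_add, hst, htr d, htr d, htr d] at hz
  simp only [mul_assoc] at hz hp hq ⊢
  linarith

lemma two_unitary (x : A) (hx : IsUnit x) (hn : ‖x‖ ≤ 1) :
    ∃ u ∈ unitary A, ∃ v ∈ unitary A, (2 : ℝ) • x = u + v := by
  have hp : IsStrictlyPositive (star x * x) := (hx.star.mul hx).isStrictlyPositive (star_mul_self_nonneg x)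
  obtain ⟨h, hs, hh, hhs⟩ : ∃ h : A, IsSelfAdjoint h ∧ h * h = star x * x ∧ h = CFC.sqrt (star x * x) :=
    ⟨_, (CFC.sqrt_nonneg _).isSelfAdjoint, CFC.sqrt_mul_sqrt_self _ hp.nonneg, rfl⟩
  have hu : IsUnit h := by
    have : IsUnit (h * h) := hh ▸ hp.isUnit
    exact ((Commute.refl h).isUnit_mul_iff.1 this).1
  have hnorm : ‖h‖ ≤ 1 := by
    have := hs.norm_mul_self
    rw [hh, CStarRing.norm_star_mul_self] at this
    nlinarith [norm_nonneg h, norm_nonneg x]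
  obtain ⟨k, rfl⟩ := hu
  have hks : star (↑k⁻¹ : A) = ↑k⁻¹ := by
    have h2 : star k = k := Units.ext hs
    rw [← Units.coe_star, star_inv, h2]
  have hU : x * ↑k⁻¹ ∈ unitary A := by
    have hl : star (x * ↑k⁻¹) * (x * ↑k⁻¹) = 1 := by
      rw [star_mul, hks, mul_assoc, ← mul_assoc (star x), ← hh]
      simp [mul_assoc]
    have hun : IsUnit (x * (↑k⁻¹ : A)) := hx.mul k⁻¹.isUnit
    refine Unitary.mem_iff.2 ⟨hl, ?_⟩
    obtain ⟨m, hm⟩ := hun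
    rw [← hm] at hl ⊢
    have h9 : star (m : A) = ↑m⁻¹ := by
      rw [← mul_one (star (m : A)), ← m.mul_inv, ← mul_assoc, hl, one_mul]
    rw [h9]
    simp
  have hW := hs.self_add_I_smul_cfcSqrt_sub_sq_mem_unitary _ hnorm
  refine ⟨_, mul_mem hU hW, _, mul_mem hU (Unitary.star_mem hW), ?_⟩
  have hq : star (CFC.sqrt (1 - (k : A) ^ 2)) = CFC.sqrt (1 - (k : A) ^ 2) :=
    IsSelfAdjoint.star_eq (CFC.sqrt_nonneg (1 - (k : A) ^ 2)).isSelfAdjoint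
  rw [← mul_add, star_add, star_smul, hs.star_eq, hq]
  simp [mul_add, mul_assoc, two_smul]
  abel

lemma russo (f : A →ₗ[ℝ] ℝ) (C : ℝ) (hf : ∀ u ∈ unitary A, f u ≤ C) (y : A) (hy : ‖y‖ < 1) :
    f y ≤ C := by
  have hind : ∀ n : ℕ, ∀ V ∈ unitary A, f V + n * f y ≤ (n + 1) * C := by
    intro n
    induction n with
    | zero => intro V hV; simpa using hf V hV
    | succ n ih =>
      intro V hV
      have hn : ‖star V * y‖ < 1 := by
        refine lt_of_le_of_lt ?_ hy
        rw [CStarRing.norm_mem_unitary_mul _ (Unitary.star_mem hV)]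
      have hunit : IsUnit (V + y) := by
        have h1 : IsUnit (1 - -(star V * y)) := isUnit_one_sub_of_norm_lt_one (by rwa [norm_neg])
        have h2 : V + y = V * (1 - -(star V * y)) := by
          rw [sub_neg_eq_add, mul_add, ← mul_assoc, Unitary.mul_star_self_of_mem hV]; simp
        rw [h2]
        exact (Unitary.toUnits ⟨V, hV⟩).isUnit.mul h1
      have hV1 : ‖V‖ ≤ 1 := by
        have := CStarRing.norm_star_mul_self (x := V)
        rw [Unitary.star_mul_self_of_mem hV] at this
        have h3 : ‖(1:A)‖ ≤ 1 := by
          rcases subsingleton_or_nontrivial A with h | h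
          · simp [Subsingleton.elim (1:A) 0]
          · simp
        nlinarith [norm_nonneg V]
      obtain ⟨u, hu, v, hv, huv⟩ := two_unitary ((2⁻¹ : ℝ) • (V + y))
        (by
          have := (Units.mk0 (2⁻¹ : ℝ) (by norm_num)).isUnit
          exact hunit.smul (Units.mk0 (2⁻¹ : ℝ) (by norm_num)))
        (by
          rw [norm_smul]
          have := norm_add_le V y
          norm_num
          linarith)
      rw [smul_smul] at huv
      norm_num at huv
      have h4 := congrArg f huv
      rw [map_add, map_add] at h4
      have h5 := ih u hu
      have h6 := hf v hv
      push_cast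
      linarith
  by_contra hlt
  push Not at hlt
  obtain ⟨n, hn⟩ := exists_nat_gt ((C - f 1) / (f y - C))
  have h7 := hind n 1 (one_mem _)
  rw [div_lt_iff₀ (by linarith)] at hn
  linarith

theorem tracial_real (T : A →ₗ[ℝ] ℝ) (h1 : T 1 = 1) (hpos : ∀ a : A, 0 ≤ a → 0 ≤ T a)
    (htr : ∀ x y : A, T (x * y) = T (y * x)) (hst : ∀ x : A, T (star x) = T x)
    (F G : ℝ → ℝ) (hF : Continuous F) (hG : Continuous G)
    (hFG : ∀ s t : ℝ, 0 ≤ s → 0 ≤ t → s * t ≤ F t + G s)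
    (a b : A) (ha : 0 ≤ a) (hb : 0 ≤ b) :
    T (CFC.sqrt (star (a * b) * (a * b))) ≤ T (cfc F a) + T (cfc G b) := by
  set z := a * b with hz
  set w := star z * z with hw
  have hw0 : 0 ≤ w := star_mul_self_nonneg z
  have hws : IsSelfAdjoint w := hw0.isSelfAdjoint
  refine le_of_forall_pos_le_add fun ε hε => ?_
  have hne : ∀ t : ℝ, √t + ε ≠ 0 := fun t => by positivity
  have hgc : Continuous fun t : ℝ => (√t + ε)⁻¹ := by
    exact Continuous.inv₀ (by fun_prop) hne
  have hgo : ContinuousOn (fun t : ℝ => (√t + ε)⁻¹) (spectrum ℝ w) := hgc.continuousOn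
  set k := cfc (fun t : ℝ => (√t + ε)⁻¹) w with hk
  have hks : IsSelfAdjoint k := cfc_predicate _ _
  have hkw : k * w = cfc (fun t : ℝ => (√t + ε)⁻¹ * t) w := by
    rw [cfc_mul _ _ w hgo (by fun_prop), cfc_id' ℝ w]
  have hyn : ‖z * k‖ < 1 := by
    have e : star (z * k) * (z * k) = cfc (fun t : ℝ => (√t + ε)⁻¹ * t * (√t + ε)⁻¹) w := by
      rw [cfc_mul (fun t : ℝ => (√t + ε)⁻¹ * t) _ w (hgo.mul continuousOn_id) hgo, ← hkw, star_mul, hks.star_eq, ← hk]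
      simp only [hw, mul_assoc]
    have : ‖star (z * k) * (z * k)‖ < 1 := by
      rw [e]
      refine norm_cfc_lt one_pos fun t ht => ?_
      have ht0 := spectrum_nonneg_of_nonneg hw0 ht
      rw [Real.norm_eq_abs, abs_of_nonneg (by positivity)]
      have h2 := Real.sq_sqrt ht0
      have h3 := Real.sqrt_nonneg t
      have h4 : (√t + ε)⁻¹ * t * (√t + ε)⁻¹ = t / (√t + ε)^2 := by field_simp
      rw [h4, div_lt_one (by positivity)]
      nlinarith [mul_nonneg h3 hε.le, mul_pos hε hε]
    rw [CStarRing.norm_star_mul_self] at this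
    nlinarith [norm_nonneg (z * k)]
  let f : A →ₗ[ℝ] ℝ := 
    { toFun := fun x => T (star x * z)
      map_add' := fun x y => by rw [star_add, add_mul, map_add]
      map_smul' := fun r x => by simp [star_smul] }
  have hR := russo f (T (cfc F a) + T (cfc G b)) (fun u hu =>
    tr_unitary_le T h1 hpos htr hst F G hF hG hFG a b ha hb u hu) _ hyn
  have hfv : f (z * k) = T (k * w) := by
    change T (star (z * k) * z) = _
    rw [star_mul, hks.star_eq, mul_assoc]
  have hle : CFC.sqrt w ≤ k * w + algebraMap ℝ A ε := by
    rw [hkw, CFC.sqrt_eq_real_sqrt w hw0, cfcₙ_eq_cfc, ← cfc_add_const ε _ w (by fun_prop)]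
    refine cfc_mono (fun t ht => ?_) (by fun_prop) (by fun_prop)
    have ht0 := spectrum_nonneg_of_nonneg hw0 ht
    have h2 := Real.sq_sqrt ht0
    have h3 := Real.sqrt_nonneg t
    rw [inv_mul_eq_div, ← sub_le_iff_le_add, le_div_iff₀ (by positivity)]
    nlinarith
  have hfin := hpos _ (sub_nonneg.2 hle)
  rw [map_sub, map_add, Algebra.algebraMap_eq_smul_one, map_smul, h1, smul_eq_mul] at hfin
  linarith
end

/-- **A tracial Fenchel–Young inequality in a C*-algebra.** -/
theorem tracial_fenchel_young {A : Type*} [CStarAlgebra A] [PartialOrder A] [StarOrderedRing A]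
    (τ : A →ₗ[ℂ] ℂ) (hτ1 : τ 1 = 1)
    (hτpos : ∀ a : A, 0 ≤ a → 0 ≤ τ a)
    (hτtr : ∀ x y : A, τ (x * y) = τ (y * x))
    (F G : ℝ → ℝ) (hF : Continuous F) (hG : Continuous G)
    (hFG : ∀ s t : ℝ, 0 ≤ s → 0 ≤ t → s * t ≤ F t + G s)
    (a b : A) (ha : 0 ≤ a) (hb : 0 ≤ b) :
    τ (CStarAbs (a * b)) ≤ τ (cfc F a) + τ (cfc G b) := by
  have hstar : ∀ x : A, τ (star x) = star (τ x) := fun x =>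
    map_star (PositiveLinearMap.mk₀ τ hτpos) x
  have him : ∀ x : A, IsSelfAdjoint x → (τ x).im = 0 := fun x hx => by
    have := hstar x
    rw [hx.star_eq] at this
    exact Complex.conj_eq_iff_im.1 this.symm
  have hF' : IsSelfAdjoint (cfc F a) := cfc_predicate _ _
  have hG' : IsSelfAdjoint (cfc G b) := cfc_predicate _ _
  unfold CStarAbs
  rw [Complex.le_def, Complex.add_im, him _ hF', him _ hG',
    him _ (CFC.sqrt_nonneg (star (a * b) * (a * b))).isSelfAdjoint]
  refine ⟨?_, by simp⟩
  rw [Complex.add_re]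
  exact tracial_real (Complex.reLm ∘ₗ τ.restrictScalars ℝ) (by simp [hτ1])
    (fun a ha => (Complex.le_def.1 (hτpos a ha)).1) (fun x y => by simp [hτtr x y])
    (fun x => by simp [hstar]) F G hF hG hFG a b ha hb
end

section
/- Let p, q be positive real numbers with 1/p + 1/q = 1, and let A, B be positive semidefinite n×n complex matrices. Then tr(|AB|) ≤ p⁻¹ tr(Aᵖ) + q⁻¹ tr(B^q), and equality holds if and only if B^q = Aᵖ. -/
open scoped ComplexOrder

/-- The absolute value `|Z| = (Zᴴ Z)^(1/2)` of a square complex matrix. -/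
noncomputable def matAbs {n : ℕ} (Z : Matrix (Fin n) (Fin n) ℂ) : Matrix (Fin n) (Fin n) ℂ :=
  (Matrix.posSemidef_conjTranspose_mul_self Z).1.cfc Real.sqrt

/-- Real powers of a positive semidefinite (in particular, Hermitian) matrix, obtained by
applying `t ↦ t ^ r` to the eigenvalues; junk value `0` on non-Hermitian matrices. -/
noncomputable def matRpow {n : ℕ} (A : Matrix (Fin n) (Fin n) ℂ) (r : ℝ) :
    Matrix (Fin n) (Fin n) ℂ :=
  if hA : A.IsHermitian then hA.cfc (fun t => t ^ r) else 0

open Matrix in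
lemma aux_spec {n : ℕ} {A : Matrix (Fin n) (Fin n) ℂ} (hA : A.PosSemidef) :
    ∃ (U : Matrix (Fin n) (Fin n) ℂ) (a : Fin n → ℝ), U * Uᴴ = 1 ∧ Uᴴ * U = 1 ∧ (∀ i, 0 ≤ a i) ∧
      A = U * diagonal (fun i => (a i : ℂ)) * Uᴴ ∧
      (∀ f : ℝ → ℝ, hA.1.cfc f = U * diagonal (fun i => ((f (a i) : ℝ) : ℂ)) * Uᴴ) := by
  refine ⟨hA.1.eigenvectorUnitary, hA.1.eigenvalues, ?_, ?_, hA.eigenvalues_nonneg, ?_, ?_⟩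
  · exact Unitary.mul_star_self_of_mem hA.1.eigenvectorUnitary.2
  · exact Unitary.star_mul_self_of_mem hA.1.eigenvectorUnitary.2
  · conv_lhs => rw [hA.1.spectral_theorem]
    rfl
  · intro f
    rfl

open Matrix in
lemma aux_trace {n : ℕ} {U D : Matrix (Fin n) (Fin n) ℂ} (h : Uᴴ * U = 1) :
    (U * D * Uᴴ).trace = D.trace := by
  rw [trace_mul_comm, ← mul_assoc, h, one_mul]

open Matrix in
lemma aux_polar {n : ℕ} (Z : Matrix (Fin n) (Fin n) ℂ) :
    ∃ (K : Matrix (Fin n) (Fin n) ℂ) (t : ℝ), K * Z = matAbs Z ∧ K * Kᴴ * K = K ∧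
      0 ≤ t ∧ (matAbs Z).trace = t := by
  obtain ⟨V, d, h1, h2, hd, hZ, hf⟩ := aux_spec (posSemidef_conjTranspose_mul_self Z)
  have h2' : ∀ X : Matrix (Fin n) (Fin n) ℂ, Vᴴ * (V * X) = X := fun X => by
    rw [← mul_assoc, h2, one_mul]
  set E : Matrix (Fin n) (Fin n) ℂ := diagonal (fun i => (((√(d i))⁻¹ : ℝ) : ℂ)) with hE
  have hEs : Eᴴ = E := by
    rw [hE, diagonal_conjTranspose]
    congr 1
    ext i
    simp
  have hED : E * diagonal (fun i => (d i : ℂ)) = diagonal (fun i => ((√(d i) : ℝ) : ℂ)) := by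
    rw [hE, diagonal_mul_diagonal]
    congr 1
    ext i
    rw [← Complex.ofReal_mul, inv_mul_eq_div, Real.div_sqrt]
  have hEE : diagonal (fun i => ((√(d i) : ℝ) : ℂ)) * (E * E) = E := by
    rw [hE, diagonal_mul_diagonal, diagonal_mul_diagonal]
    congr 1
    ext i
    rw [← Complex.ofReal_mul, ← Complex.ofReal_mul]
    congr 1
    by_cases h : √(d i) = 0
    · simp [h]
    · field_simp
  refine ⟨V * E * Vᴴ * Zᴴ, ∑ i, √(d i), ?_, ?_, Finset.sum_nonneg fun i _ => Real.sqrt_nonneg _, ?_⟩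
  · rw [matAbs, hf, mul_assoc, hZ, ← hED]
    simp only [mul_assoc, h2']
  · have : (V * E * Vᴴ * Zᴴ) * (V * E * Vᴴ * Zᴴ)ᴴ * (V * E * Vᴴ * Zᴴ)
        = V * E * Vᴴ * (Zᴴ * Z) * (V * E * Vᴴ) * (V * E * Vᴴ) * Zᴴ := by
      simp only [conjTranspose_mul, conjTranspose_conjTranspose, hEs, mul_assoc]
    rw [this, hZ]
    simp only [mul_assoc, h2']
    rw [← mul_assoc E (diagonal _), hED]
    rw [← mul_assoc E E, ← mul_assoc (diagonal _) (E * E), hEE]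
  · rw [matAbs, hf, aux_trace h2, trace_diagonal]
    push_cast
    rfl

open Matrix in
lemma aux_row {n : ℕ} {L : Matrix (Fin n) (Fin n) ℂ} (h : L * Lᴴ * L = L) (i : Fin n) :
    ∑ j, ‖L i j‖ ^ 2 ≤ 1 := by
  set G := L * Lᴴ with hG
  have hGG : G * Gᴴ = G := by
    have : Gᴴ = G := by simp [hG]
    rw [this]
    conv_lhs => rw [hG, ← mul_assoc, ← hG, h]
  have key : ∀ (M : Matrix (Fin n) (Fin n) ℂ), (M * Mᴴ) i i = ((∑ j, ‖M i j‖ ^ 2 : ℝ) : ℂ) := by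
    intro M
    rw [mul_apply]
    push_cast
    refine Finset.sum_congr rfl fun j _ => ?_
    rw [conjTranspose_apply]
    exact Complex.mul_conj' _
  have e1 : G i i = ((∑ j, ‖L i j‖ ^ 2 : ℝ) : ℂ) := key L
  have e2 : G i i = ((∑ j, ‖G i j‖ ^ 2 : ℝ) : ℂ) := by
    conv_lhs => rw [← hGG]
    exact key G
  have e3 : ∑ j, ‖G i j‖ ^ 2 = ∑ j, ‖L i j‖ ^ 2 := by
    exact_mod_cast e2.symm.trans e1
  have e4 : ‖G i i‖ ^ 2 ≤ ∑ j, ‖G i j‖ ^ 2 :=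
    Finset.single_le_sum (f := fun j => ‖G i j‖ ^ 2) (fun j _ => by positivity) (Finset.mem_univ i)
  rw [e3, e1, Complex.norm_real, Real.norm_eq_abs, sq_abs] at e4
  nlinarith

open Matrix in
lemma aux_col {n : ℕ} {L : Matrix (Fin n) (Fin n) ℂ} (h : L * Lᴴ * L = L) (j : Fin n) :
    ∑ i, ‖L i j‖ ^ 2 ≤ 1 := by
  have := aux_row (L := Lᴴ) (by
    have := congrArg conjTranspose h
    simpa [conjTranspose_mul, mul_assoc] using this) j
  simpa [conjTranspose_apply] using this

lemma aux_dbl {n : ℕ} (M : Fin n → Fin n → ℝ) (hr : ∀ i, ∑ j, M i j ≤ 1)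
    (hc : ∀ j, ∑ i, M i j ≤ 1) (c d : Fin n → ℝ) (hcn : ∀ i, 0 ≤ c i) (hd : ∀ j, 0 ≤ d j) :
    ∑ i, ∑ j, (c i + d j) * M i j ≤ ∑ i, c i + ∑ j, d j := by
  simp only [add_mul, Finset.sum_add_distrib]
  apply add_le_add
  · refine Finset.sum_le_sum fun i _ => ?_
    rw [← Finset.mul_sum]
    exact mul_le_of_le_one_right (hcn i) (hr i)
  · rw [Finset.sum_comm]
    refine Finset.sum_le_sum fun i _ => ?_
    rw [← Finset.mul_sum]
    exact mul_le_of_le_one_right (hd i) (hc i)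

open Matrix in
lemma aux_abs {n : ℕ} {P : Matrix (Fin n) (Fin n) ℂ} (hP : P.PosSemidef) : matAbs P = P := by
  obtain ⟨V, d, h1, h2, hd, hZ, hf⟩ := aux_spec (posSemidef_conjTranspose_mul_self P)
  have hM : (matAbs P) * (matAbs P) = P * P := by
    conv_rhs => rw [← congrArg (· * P) hP.1.eq]
    rw [hZ, matAbs, hf]
    have : V * diagonal (fun i => ((√(d i) : ℝ) : ℂ)) * Vᴴ *
        (V * diagonal (fun i => ((√(d i) : ℝ) : ℂ)) * Vᴴ) =
        V * diagonal (fun i => ((√(d i) : ℝ) : ℂ)) * (Vᴴ * V) *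
          diagonal (fun i => ((√(d i) : ℝ) : ℂ)) * Vᴴ := by simp only [mul_assoc]
    rw [this, h2, mul_one, mul_assoc V, diagonal_mul_diagonal]
    congr 3
    ext i
    rw [← Complex.ofReal_mul, Real.mul_self_sqrt (hd i)]
  have hMp : (matAbs P).PosSemidef := by
    rw [matAbs, hf]
    apply PosSemidef.mul_mul_conjTranspose_same
    rw [posSemidef_diagonal_iff]
    intro i
    exact_mod_cast Real.sqrt_nonneg _
  open scoped MatrixOrder in
  exact (CFC.mul_self_eq_mul_self_iff _ _ hMp.nonneg hP.nonneg).1 hM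

open Matrix in
lemma aux_eq {n : ℕ} {U V X Y : Matrix (Fin n) (Fin n) ℂ} (hU : U * Uᴴ = 1) (hV : V * Vᴴ = 1)
    (h : Uᴴ * X * V = Uᴴ * Y * V) : X = Y := by
  have : ∀ X : Matrix (Fin n) (Fin n) ℂ, U * (Uᴴ * X * V) * Vᴴ = X := fun X => by
    rw [mul_assoc, mul_assoc, mul_assoc, hV, mul_one, ← mul_assoc, hU, one_mul]
  rw [← this X, h, this Y]

open Matrix

/-- **Matrix tracial Young inequality, with its equality case.** -/
theorem matrix_tracial_young {n : ℕ} (p q : ℝ) (hp : 0 < p) (hq : 0 < q)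
    (hpq : 1 / p + 1 / q = 1)
    (A B : Matrix (Fin n) (Fin n) ℂ) (hA : A.PosSemidef) (hB : B.PosSemidef) :
    (matAbs (A * B)).trace ≤ (p⁻¹ : ℂ) * (matRpow A p).trace + (q⁻¹ : ℂ) * (matRpow B q).trace ∧
      ((matAbs (A * B)).trace =
          (p⁻¹ : ℂ) * (matRpow A p).trace + (q⁻¹ : ℂ) * (matRpow B q).trace ↔
        matRpow B q = matRpow A p) := by
  have hc : p.HolderConjugate q := by
    rw [Real.holderConjugate_iff]
    have : 0 < 1 / q := by positivity
    have h1 : 1 / p < 1 := by linarith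
    refine ⟨by rwa [div_lt_one hp] at h1, by simpa using hpq⟩
  obtain ⟨U, a, hU, hU', ha, hAe, hfA⟩ := aux_spec hA
  obtain ⟨V, b, hV, hV', hb, hBe, hfB⟩ := aux_spec hB
  obtain ⟨K, t, hK, hKK, ht, htr⟩ := aux_polar (A * B)
  have hRA : matRpow A p = U * diagonal (fun i => ((a i ^ p : ℝ) : ℂ)) * Uᴴ := by
    rw [matRpow, dif_pos hA.1, hfA]
  have hRB : matRpow B q = V * diagonal (fun i => ((b i ^ q : ℝ) : ℂ)) * Vᴴ := by
    rw [matRpow, dif_pos hB.1, hfB]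
  have tA : (matRpow A p).trace = ((∑ i, a i ^ p : ℝ) : ℂ) := by
    rw [hRA, aux_trace hU', trace_diagonal]; push_cast; rfl
  have tB : (matRpow B q).trace = ((∑ i, b i ^ q : ℝ) : ℂ) := by
    rw [hRB, aux_trace hV', trace_diagonal]; push_cast; rfl
  have hRHS : (p⁻¹ : ℂ) * (matRpow A p).trace + (q⁻¹ : ℂ) * (matRpow B q).trace =
      ((∑ i, a i ^ p / p + ∑ i, b i ^ q / q : ℝ) : ℂ) := by
    rw [tA, tB, ← Finset.sum_div, ← Finset.sum_div]
    push_cast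
    ring
  set Y := Uᴴ * V with hY
  set L := Vᴴ * K * U with hL
  have hYY : Y * Yᴴ * Y = Y := by
    have : Y * Yᴴ * Y = Uᴴ * (V * Vᴴ) * (U * Uᴴ) * V := by
      simp only [hY, conjTranspose_mul, conjTranspose_conjTranspose, mul_assoc]
    rw [this, hU, hV, mul_one, mul_one]
  have hLL : L * Lᴴ * L = L := by
    have : L * Lᴴ * L = Vᴴ * (K * (U * Uᴴ) * Kᴴ * (V * Vᴴ) * K) * U := by
      simp only [hL, conjTranspose_mul, conjTranspose_conjTranspose, mul_assoc]
    rw [this, hU, hV, mul_one, mul_one, hKK]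
  -- entries of `Uᴴ A^p V` and of `Uᴴ B^q V`
  have hEA : ∀ f : Fin n → ℂ, Uᴴ * (U * diagonal f * Uᴴ) * V = diagonal f * Y := fun f => by
    rw [← mul_assoc, ← mul_assoc, hU', one_mul, mul_assoc]
  have hEB : ∀ f : Fin n → ℂ, Uᴴ * (V * diagonal f * Vᴴ) * V = Y * diagonal f := fun f => by
    rw [mul_assoc, mul_assoc _ Vᴴ V, hV', mul_one, ← mul_assoc]
  have hiff : matRpow B q = matRpow A p ↔ ∀ i j, Y i j ≠ 0 → a i ^ p = b j ^ q := by
    constructor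
    · intro h i j hij
      have h1 := congrArg (fun X => (Uᴴ * X * V) i j) h
      simp only [hRA, hRB, hEA, hEB, diagonal_mul, mul_diagonal] at h1
      rw [mul_comm] at h1
      exact_mod_cast (mul_right_cancel₀ hij h1).symm
    · intro h
      apply aux_eq hU hV
      rw [hRA, hRB, hEA, hEB]
      ext i j
      rw [diagonal_mul, mul_diagonal]
      by_cases hij : Y i j = 0
      · simp [hij]
      · rw [h i j hij, mul_comm]
  have htsum : (t : ℂ) = ∑ i, ∑ j, (a i * b j : ℂ) * (L j i * Y i j) := by
    have e : K * (A * B) = K * U * diagonal (fun i => (a i : ℂ)) * Y *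
        diagonal (fun i => (b i : ℂ)) * Vᴴ := by
      conv_lhs => rw [hAe, hBe]
      simp only [hY, mul_assoc]
    rw [← htr, ← hK, e, trace_mul_comm]
    have e2 : Vᴴ * (K * U * diagonal (fun i => (a i : ℂ)) * Y * diagonal (fun i => (b i : ℂ))) =
       (L * diagonal (fun i => (a i : ℂ))) * (Y * diagonal (fun i => (b i : ℂ))) := by
      simp only [hL, mul_assoc]
    rw [e2, trace, Finset.sum_comm]
    refine Finset.sum_congr rfl fun j _ => ?_
    rw [diag_apply, mul_apply]
    refine Finset.sum_congr rfl fun i _ => ?_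
    rw [mul_diagonal, mul_diagonal]
    ring
  set M : Fin n → Fin n → ℝ := fun i j => (‖L j i‖ ^ 2 + ‖Y i j‖ ^ 2) / 2 with hM
  have hM0 : ∀ i j, 0 ≤ M i j := fun i j => by positivity
  have hS1 : t ≤ ∑ i, ∑ j, (a i * b j) * M i j := by
    have : t = ‖(t : ℂ)‖ := by rw [Complex.norm_real, Real.norm_of_nonneg ht]
    rw [this, htsum]
    refine (norm_sum_le _ _).trans (Finset.sum_le_sum fun i _ => ?_)
    refine (norm_sum_le _ _).trans (Finset.sum_le_sum fun j _ => ?_)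
    rw [norm_mul, norm_mul, norm_mul, Complex.norm_real, Complex.norm_real,
      Real.norm_of_nonneg (ha i), Real.norm_of_nonneg (hb j)]
    refine mul_le_mul_of_nonneg_left ?_ (mul_nonneg (ha i) (hb j))
    simp only [hM]
    nlinarith [sq_nonneg (‖L j i‖ - ‖Y i j‖)]
  have hyoung : ∀ i j, a i * b j ≤ a i ^ p / p + b j ^ q / q := fun i j =>
    Real.young_inequality_of_nonneg (ha i) (hb j) hc
  have hterm : ∀ i j, (a i * b j) * M i j ≤ (a i ^ p / p + b j ^ q / q) * M i j := fun i j =>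
    mul_le_mul_of_nonneg_right (hyoung i j) (hM0 i j)
  have hS3 : ∑ i, ∑ j, (a i ^ p / p + b j ^ q / q) * M i j ≤
      ∑ i, a i ^ p / p + ∑ j, b j ^ q / q := by
    apply aux_dbl M
    · intro i
      have h1 := aux_col hLL i
      have h2 := aux_row hYY i
      simp only [hM]
      rw [← Finset.sum_div, Finset.sum_add_distrib]
      linarith
    · intro i
      have h1 := aux_row hLL i
      have h2 := aux_col hYY i
      simp only [hM]
      rw [← Finset.sum_div, Finset.sum_add_distrib]
      linarith
    · intro i
      exact div_nonneg (Real.rpow_nonneg (ha i) _) hp.le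
    · intro i
      exact div_nonneg (Real.rpow_nonneg (hb i) _) hq.le
  have hS2 : ∑ i, ∑ j, (a i * b j) * M i j ≤ ∑ i, ∑ j, (a i ^ p / p + b j ^ q / q) * M i j :=
    Finset.sum_le_sum fun i _ => Finset.sum_le_sum fun j _ => hterm i j
  refine ⟨?_, ?_, ?_⟩
  · rw [hRHS, htr]
    exact_mod_cast (hS1.trans hS2).trans hS3
  · intro h
    rw [hRHS, htr] at h
    have h' : t = ∑ i, a i ^ p / p + ∑ i, b i ^ q / q := by exact_mod_cast h
    have hSe : ∑ i, ∑ j, (a i * b j) * M i j = ∑ i, ∑ j, (a i ^ p / p + b j ^ q / q) * M i j :=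
      le_antisymm hS2 (by linarith)
    rw [hiff]
    intro i j hij
    rw [Finset.sum_eq_sum_iff_of_le
      (fun i _ => Finset.sum_le_sum fun j _ => hterm i j)] at hSe
    have h1 := hSe i (Finset.mem_univ i)
    rw [Finset.sum_eq_sum_iff_of_le (fun j _ => hterm i j)] at h1
    have h2 := h1 j (Finset.mem_univ j)
    have hpos : M i j ≠ 0 := by
      have : 0 < ‖Y i j‖ := norm_pos_iff.2 hij
      have : 0 < M i j := by positivity
      exact this.ne'
    exact (Real.young_inequality_eq_iff_of_nonneg (ha i) (hb j) hc).1 (mul_right_cancel₀ hpos h2)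
  · intro h
    have h0 := hiff.1 h
    have hAB : A * B = matRpow A p := by
      apply aux_eq hU hV
      have e : Uᴴ * (A * B) * V = diagonal (fun i => (a i : ℂ)) * Y *
          diagonal (fun i => (b i : ℂ)) := by
        have : Uᴴ * (A * B) * V = (Uᴴ * U) * diagonal (fun i => (a i : ℂ)) * Y *
            diagonal (fun i => (b i : ℂ)) * (Vᴴ * V) := by
          conv_lhs => rw [hAe, hBe]
          simp only [hY, mul_assoc]
        rw [this, hU', hV', one_mul, mul_one]
      rw [e, hRA, hEA]
      ext i j
      rw [mul_diagonal, diagonal_mul, diagonal_mul]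
      by_cases hij : Y i j = 0
      · simp [hij]
      · have h1 := h0 i j hij
        have h2 := (Real.young_inequality_eq_iff_of_nonneg (ha i) (hb j) hc).2 h1
        have h3 : a i * b j = a i ^ p := by
          rw [h2, ← h1]
          linear_combination (a i ^ p) * hpq
        rw [← h3]
        push_cast
        ring
    have hPS : (matRpow A p).PosSemidef := by
      rw [hRA]
      apply PosSemidef.mul_mul_conjTranspose_same
      rw [posSemidef_diagonal_iff]
      intro i
      exact_mod_cast Real.rpow_nonneg (ha i) _
    rw [hAB, aux_abs hPS, h, ← add_mul]
    have : (p⁻¹ : ℂ) + (q⁻¹ : ℂ) = 1 := by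
      have := hpq
      simp only [one_div] at this
      exact_mod_cast this
    rw [this, one_mul]
end
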